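/- arXiv:1602.02108 — 6 statements merged into one kernel-verified Lean document; each statement's English description precedes it below -/
import Mathlib

section
/- Let μ ∈ ℝ, c ≠ 0 and σ > 0 with μc ≥ 0, and let T be a random variable whose law has density f(t) = |c| / (σ√(2πt³)) · exp(−(μt−c)² / (2σ²t)) for t > 0 (and 0 for t ≤ 0) with respect to Lebesgue measure. Then the random variable H(T) = (μT − c)² / (σ²T) has the χ²(1) distribution, i.e., the law of H(T) equals the law of Z² for Z standard normal. -/
open MeasureTheory ProbabilityTheory Real

/-! The signed square root `w = a√t - b/√t` of `(at - b)² / t` satisfies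
`√(w² + 4ab) = a√t + b/√t`, so changing variables from `t` to `w` turns the inverse Gaussian law
into the standard Gaussian law weighted by `1 - w / √(w² + 4ab)`. The weight differs from `1` by an
odd function, which the even map `w ↦ w²` cannot detect. -/

theorem map_withDensity_of_add_neg_eq_two {α β : Type*} [MeasurableSpace α] [InvolutiveNeg α]
    [MeasurableNeg α] [MeasurableSpace β] {ν : Measure α} [ν.IsNegInvariant] {k : α → ENNReal}
    (hk : Measurable k) (hk2 : ∀ᵐ x ∂ν, k x + k (-x) = 2) {q : α → β} (hq : Measurable q)
    (hq_even : q.Even) : (ν.withDensity k).map q = ν.map q := by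
  refine Measure.ext_of_lintegral _ fun g hg ↦ ?_
  have hgq : Measurable fun x ↦ g (q x) := hg.comp hq
  rw [lintegral_map hg hq, lintegral_map hg hq, lintegral_withDensity_eq_lintegral_mul ν hk hgq]
  refine (ENNReal.mul_right_inj two_ne_zero ENNReal.ofNat_ne_top).1 ?_
  calc 2 * ∫⁻ x, k x * g (q x) ∂ν
      = ∫⁻ x, k x * g (q x) ∂ν + ∫⁻ x, k (-x) * g (q (-x)) ∂ν := by
        rw [lintegral_neg_eq_self fun x ↦ k x * g (q x), two_mul]
    _ = ∫⁻ x, (k x + k (-x)) * g (q x) ∂ν := by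
        simp only [hq_even _, add_mul]
        exact (lintegral_add_left (hk.mul hgq) _).symm
    _ = ∫⁻ x, 2 * g (q x) ∂ν := by
        refine lintegral_congr_ae ?_
        filter_upwards [hk2] with x hx
        rw [hx]
    _ = 2 * ∫⁻ x, g (q x) ∂ν := lintegral_const_mul 2 hgq

theorem map_withDensity_abs_deriv_mul_comp {s : Set ℝ} {f f' : ℝ → ℝ} (hs : MeasurableSet s)
    (hf' : ∀ x ∈ s, HasDerivWithinAt f (f' x) s x) (hf : Set.InjOn f s) (hfm : Measurable f)
    (p : ℝ → ENNReal) :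
    ((volume.restrict s).withDensity fun x ↦ ENNReal.ofReal |f' x| * p (f x)).map f =
      (volume.restrict (f '' s)).withDensity p := by
  ext A hA
  rw [Measure.map_apply hfm hA, withDensity_apply _ (hfm hA), withDensity_apply _ hA,
    Measure.restrict_restrict (hfm hA), Measure.restrict_restrict hA, Set.inter_comm A,
    ← Set.image_inter_preimage, Set.inter_comm s]
  exact (lintegral_image_eq_lintegral_abs_deriv_mul ((hfm hA).inter hs)
    (fun x hx ↦ (hf' x hx.2).mono Set.inter_subset_right) (hf.mono Set.inter_subset_right) p).symm

theorem withDensity_restrict_eq_of_ae_eq_zero {α : Type*} [MeasurableSpace α] {ν : Measure α}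
    {s : Set α} (hs : MeasurableSet s) {p : α → ENNReal} (hp : ∀ᵐ x ∂ν, x ∉ s → p x = 0) :
    (ν.restrict s).withDensity p = ν.withDensity p := by
  rw [← withDensity_indicator hs]
  refine withDensity_congr_ae ?_
  filter_upwards [hp] with x hx
  exact Set.indicator_apply_eq_self.2 hx

theorem isNegInvariant_gaussianReal_zero (v : NNReal) : (gaussianReal 0 v).IsNegInvariant :=
  ⟨gaussianReal_map_neg.trans (by rw [neg_zero])⟩

/-- The signed square root of `(a * t - b) ^ 2 / t`: the change of variables from the
inverse Gaussian law to a weighted Gaussian law. -/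
noncomputable def signedRoot (a b t : ℝ) : ℝ := a * √t - b / √t

section signedRoot

variable {a b t : ℝ}

@[fun_prop]
theorem measurable_signedRoot (a b : ℝ) : Measurable (signedRoot a b) := by
  unfold signedRoot
  fun_prop

theorem signedRoot_sq (ht : 0 < t) : signedRoot a b t ^ 2 = (a * t - b) ^ 2 / t := by
  obtain ⟨r, hr, rfl⟩ : ∃ r, 0 < r ∧ r ^ 2 = t := ⟨√t, sqrt_pos.2 ht, sq_sqrt ht.le⟩
  rw [signedRoot, sqrt_sq hr.le]
  field_simp

theorem sqrt_signedRoot_sq_add (ha : 0 ≤ a) (hb : 0 ≤ b) (ht : 0 < t) :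
    √(signedRoot a b t ^ 2 + 4 * a * b) = a * √t + b / √t := by
  have hr : √t ≠ 0 := (sqrt_pos.2 ht).ne'
  have hsq : signedRoot a b t ^ 2 + 4 * a * b = (a * √t + b / √t) ^ 2 := by
    rw [signedRoot]
    field_simp
    ring
  rw [hsq, sqrt_sq (by positivity)]

theorem hasDerivAt_signedRoot (ht : 0 < t) :
    HasDerivAt (signedRoot a b) ((a * t + b) / (2 * t * √t)) t := by
  have hr : √t ≠ 0 := (sqrt_pos.2 ht).ne'
  have hsqrt := hasDerivAt_sqrt ht.ne'
  refine ((hsqrt.const_mul a).sub ((hasDerivAt_const t b).div hsqrt hr)).congr_deriv ?_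
  rw [sq_sqrt ht.le]
  field_simp
  ring

theorem strictMonoOn_signedRoot (ha : 0 ≤ a) (hb : 0 < b) :
    StrictMonoOn (signedRoot a b) (Set.Ioi 0) := by
  intro s hs t _ hst
  have hs' : 0 < √s := sqrt_pos.2 hs
  have hst' : √s < √t := sqrt_lt_sqrt (le_of_lt hs) hst
  have hlinear : a * √s ≤ a * √t := by gcongr
  have hrecip : b / √t < b / √s := by gcongr
  rw [signedRoot, signedRoot]
  linarith

theorem image_signedRoot_Ioi (ha : 0 ≤ a) (hb : 0 < b) :
    signedRoot a b '' Set.Ioi 0 = {w | w < √(w ^ 2 + 4 * a * b)} := by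
  refine Set.Subset.antisymm ?_ fun w hw ↦ ?_
  · rintro _ ⟨t, ht, rfl⟩
    have hr : 0 < √t := sqrt_pos.2 ht
    have : 0 < b / √t := by positivity
    rw [Set.mem_ofPred_eq, sqrt_signedRoot_sq_add ha hb.le ht, signedRoot]
    linarith
  · set D := √(w ^ 2 + 4 * a * b)
    have hD_sq : D ^ 2 = w ^ 2 + 4 * a * b := sq_sqrt (by positivity)
    have hDw : 0 < D - w := sub_pos.2 hw
    -- `D = a√t + b/√t` and `w = a√t - b/√t` force `√t = 2b / (D - w)`.
    refine ⟨(2 * b / (D - w)) ^ 2, Set.mem_Ioi.2 (by positivity), ?_⟩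
    rw [signedRoot, sqrt_sq (by positivity)]
    field_simp
    linear_combination -hD_sq

end signedRoot

/-- The weight relating the law of the signed root of an inverse Gaussian variable, for which
`κ = 4 * a * b`, to the standard Gaussian law. -/
noncomputable def skewWeight (κ w : ℝ) : ENNReal := ENNReal.ofReal (1 - w / √(w ^ 2 + κ))

section skewWeight

variable {κ w : ℝ}

@[fun_prop]
theorem measurable_skewWeight (κ : ℝ) : Measurable (skewWeight κ) := by
  unfold skewWeight
  fun_prop

theorem skewWeight_add_neg (hκ : 0 ≤ κ) (w : ℝ) : skewWeight κ w + skewWeight κ (-w) = 2 := by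
  have habs : |w / √(w ^ 2 + κ)| ≤ 1 := by
    rw [abs_div, abs_of_nonneg (sqrt_nonneg _)]
    exact div_le_one_of_le₀ (abs_le_sqrt (by linarith)) (sqrt_nonneg _)
  obtain ⟨hlower, hupper⟩ := abs_le.1 habs
  rw [skewWeight, skewWeight, neg_sq, neg_div,
    ← ENNReal.ofReal_add (by linarith) (by linarith), ← ENNReal.ofReal_ofNat]
  congr 1
  ring

theorem skewWeight_eq_zero (hκ : 0 ≤ κ) (hw : w ≠ 0) (h : √(w ^ 2 + κ) ≤ w) :
    skewWeight κ w = 0 := by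
  have hpos : 0 < √(w ^ 2 + κ) := sqrt_pos.2 (by positivity)
  exact ENNReal.ofReal_of_nonpos (sub_nonpos.2 ((one_le_div hpos).2 h))

end skewWeight

/-- The inverse Gaussian density on `0 < t` with drift `a`, level `b` and unit volatility. The
first-passage density with drift `μ`, level `c` and volatility `σ`, where `0 ≤ μ * c`, is the case
`a = |μ| / σ`, `b = |c| / σ`. -/
noncomputable def invGaussianPDFReal (a b t : ℝ) : ℝ :=
  b / √(2 * π * t ^ 3) * rexp (-(a * t - b) ^ 2 / (2 * t))

/-- The measure on `ℝ` with density `invGaussianPDFReal a b` on the positive half-line. -/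
noncomputable def invGaussianMeasure (a b : ℝ) : Measure ℝ :=
  (volume.restrict (Set.Ioi 0)).withDensity fun t ↦ ENNReal.ofReal (invGaussianPDFReal a b t)

section invGaussian

variable {a b t : ℝ}

theorem one_sub_signedRoot_div_sqrt (ha : 0 ≤ a) (hb : 0 < b) (ht : 0 < t) :
    1 - signedRoot a b t / √(signedRoot a b t ^ 2 + 4 * a * b) = 2 * b / (a * t + b) := by
  obtain ⟨r, hr, rfl⟩ : ∃ r, 0 < r ∧ r ^ 2 = t := ⟨√t, sqrt_pos.2 ht, sq_sqrt ht.le⟩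
  have hden : a * r ^ 2 + b ≠ 0 := by positivity
  rw [sqrt_signedRoot_sq_add ha hb.le ht, signedRoot, sqrt_sq hr.le]
  field_simp
  ring

theorem invGaussianPDFReal_eq_gaussianPDFReal_signedRoot (ht : 0 < t) :
    invGaussianPDFReal a b t = b / (t * √t) * gaussianPDFReal 0 1 (signedRoot a b t) := by
  have hsqrt : √(2 * π * t ^ 3) = √(2 * π) * (t * √t) := by
    rw [sqrt_mul (by positivity), pow_succ t 2, sqrt_mul (sq_nonneg t), sqrt_sq ht.le]
  have hexp : -(a * t - b) ^ 2 / (2 * t) = -((a * t - b) ^ 2 / t) / 2 := by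
    field_simp
  rw [invGaussianPDFReal, gaussianPDFReal, hsqrt, hexp, sub_zero, signedRoot_sq ht,
    NNReal.coe_one, mul_one, mul_one, div_mul_eq_div_div_swap]
  ring

theorem ofReal_invGaussianPDFReal (ha : 0 ≤ a) (hb : 0 < b) (ht : 0 < t) :
    ENNReal.ofReal (invGaussianPDFReal a b t) =
      ENNReal.ofReal |(a * t + b) / (2 * t * √t)| *
        (gaussianPDF 0 1 (signedRoot a b t) * skewWeight (4 * a * b) (signedRoot a b t)) := by
  rw [gaussianPDF, skewWeight, one_sub_signedRoot_div_sqrt ha hb ht,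
    ← ENNReal.ofReal_mul (gaussianPDFReal_nonneg _ _ _), ← ENNReal.ofReal_mul (abs_nonneg _),
    abs_of_pos (by positivity), invGaussianPDFReal_eq_gaussianPDFReal_signedRoot ht]
  congr 1
  field_simp

theorem map_signedRoot_invGaussianMeasure (ha : 0 ≤ a) (hb : 0 < b) :
    (invGaussianMeasure a b).map (signedRoot a b) =
      (gaussianReal 0 1).withDensity (skewWeight (4 * a * b)) := by
  have hdensity : invGaussianMeasure a b = (volume.restrict (Set.Ioi 0)).withDensity fun t ↦
      ENNReal.ofReal |(a * t + b) / (2 * t * √t)| *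
        (gaussianPDF 0 1 * skewWeight (4 * a * b)) (signedRoot a b t) :=
    withDensity_congr_ae <| (ae_restrict_mem measurableSet_Ioi).mono fun t ht ↦
      ofReal_invGaussianPDFReal ha hb ht
  rw [hdensity, map_withDensity_abs_deriv_mul_comp measurableSet_Ioi
      (fun t ht ↦ (hasDerivAt_signedRoot ht).hasDerivWithinAt) (strictMonoOn_signedRoot ha hb).injOn
      (measurable_signedRoot a b), image_signedRoot_Ioi ha hb,
    withDensity_restrict_eq_of_ae_eq_zero (measurableSet_lt (by fun_prop) (by fun_prop)),
    gaussianReal_of_var_ne_zero 0 one_ne_zero,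
    withDensity_mul volume (measurable_gaussianPDF 0 1) (measurable_skewWeight _)]
  -- For `a = 0` the image misses `w = 0`, where the weight is `1` because `0 / 0 = 0`.
  filter_upwards [volume.ae_ne 0] with w hw hmem
  rw [Pi.mul_apply, skewWeight_eq_zero (by positivity) hw (not_lt.1 hmem), mul_zero]

theorem map_invGaussianMeasure_eq_map_sq_gaussianReal (ha : 0 ≤ a) (hb : 0 < b) :
    (invGaussianMeasure a b).map (fun t ↦ (a * t - b) ^ 2 / t) =
      (gaussianReal 0 1).map (fun z ↦ z ^ 2) := by
  have hpos : ∀ᵐ t ∂invGaussianMeasure a b, 0 < t :=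
    (withDensity_absolutelyContinuous _ _).ae_le (ae_restrict_mem measurableSet_Ioi)
  have := isNegInvariant_gaussianReal_zero 1
  calc (invGaussianMeasure a b).map (fun t ↦ (a * t - b) ^ 2 / t)
      = (invGaussianMeasure a b).map ((fun w ↦ w ^ 2) ∘ signedRoot a b) :=
        Measure.map_congr (hpos.mono fun t ht ↦ (signedRoot_sq ht).symm)
    _ = ((invGaussianMeasure a b).map (signedRoot a b)).map (fun w ↦ w ^ 2) :=
        (Measure.map_map (by fun_prop) (by fun_prop)).symm
    _ = ((gaussianReal 0 1).withDensity (skewWeight (4 * a * b))).map (fun w ↦ w ^ 2) := by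
        rw [map_signedRoot_invGaussianMeasure ha hb]
    _ = (gaussianReal 0 1).map (fun z ↦ z ^ 2) :=
        map_withDensity_of_add_neg_eq_two (measurable_skewWeight _)
          (.of_forall (skewWeight_add_neg (by positivity))) (by fun_prop) fun w ↦ neg_sq w

end invGaussian

section firstPassage

variable {μ c σ : ℝ}

theorem abs_div_mul_sub_abs_div_sq (hμc : 0 ≤ μ * c) (t : ℝ) :
    (|μ| / σ * t - |c| / σ) ^ 2 = (μ * t - c) ^ 2 / σ ^ 2 := by
  have habs : |μ| * |c| = μ * c := by rw [← abs_mul, abs_of_nonneg hμc]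
  rw [← mul_div_right_comm, ← sub_div, div_pow]
  congr 1
  linear_combination t ^ 2 * sq_abs μ + sq_abs c - 2 * t * habs

theorem withDensity_firstPassage_eq_invGaussianMeasure (hμc : 0 ≤ μ * c) :
    (volume.withDensity fun t ↦ ENNReal.ofReal (if 0 < t then
        |c| / (σ * √(2 * π * t ^ 3)) * rexp (-(μ * t - c) ^ 2 / (2 * σ ^ 2 * t)) else 0)) =
      invGaussianMeasure (|μ| / σ) (|c| / σ) := by
  rw [invGaussianMeasure, ← withDensity_indicator measurableSet_Ioi]
  congr 1 with t
  simp only [Set.indicator_apply, Set.mem_Ioi, apply_ite ENNReal.ofReal, ENNReal.ofReal_zero]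
  rw [invGaussianPDFReal, abs_div_mul_sub_abs_div_sq hμc, div_div, ← neg_div, div_div]
  ring_nf

end firstPassage

/-- If `T` has the inverse Gaussian first-passage density with parameters `μ`, `c ≠ 0`,
`σ > 0` and `μ c ≥ 0`, then `H(T) = (μ T − c)² / (σ² T)` has the `χ²(1)` distribution,
i.e. the law of `Z²` for `Z` standard normal. -/
theorem stmt2 {Ω : Type*} [MeasurableSpace Ω] (P : Measure Ω) [IsProbabilityMeasure P]
    (μ c σ : ℝ) (hc : c ≠ 0) (hσ : 0 < σ) (hμc : 0 ≤ μ * c)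
    (T : Ω → ℝ) (hTm : Measurable T)
    (hlaw : Measure.map T P = volume.withDensity (fun t =>
      ENNReal.ofReal (if 0 < t then
        |c| / (σ * Real.sqrt (2 * π * t ^ 3)) *
          Real.exp (-(μ * t - c) ^ 2 / (2 * σ ^ 2 * t))
      else 0))) :
    Measure.map (fun ω => (μ * T ω - c) ^ 2 / (σ ^ 2 * T ω)) P
      = (gaussianReal 0 1).map (fun z => z ^ 2) := by
  have hH (t : ℝ) : (μ * t - c) ^ 2 / (σ ^ 2 * t) = (|μ| / σ * t - |c| / σ) ^ 2 / t := by
    rw [abs_div_mul_sub_abs_div_sq hμc, div_div]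
  calc Measure.map (fun ω => (μ * T ω - c) ^ 2 / (σ ^ 2 * T ω)) P
      = (P.map T).map (fun t ↦ (|μ| / σ * t - |c| / σ) ^ 2 / t) := by
        rw [Measure.map_map (by fun_prop) hTm]
        simp only [hH, Function.comp_def]
    _ = (invGaussianMeasure (|μ| / σ) (|c| / σ)).map (fun t ↦ (|μ| / σ * t - |c| / σ) ^ 2 / t) := by
        rw [hlaw, withDensity_firstPassage_eq_invGaussianMeasure hμc]
    _ = (gaussianReal 0 1).map (fun z => z ^ 2) :=
        map_invGaussianMeasure_eq_map_sq_gaussianReal (by positivity) (by positivity)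
end

section
/- Let μ ∈ ℝ, c ≠ 0 and σ > 0 with μc ≥ 0. Then ∫₀^∞ |c| / (σ√(2πt³)) · exp(−(μt−c)² / (2σ²t)) dt = 1; that is, the inverse Gaussian first-passage density with parameters μ, c, σ is a probability density on (0,∞). -/
open MeasureTheory Real

/-!
For `c > 0` the density has an explicit primitive in terms of the centred Gaussian distribution
function `Φ` of variance `v = σ²`, namely
`t ↦ Φ (μ√t - c/√t) - exp (2μc/v) Φ (μ√t + c/√t)`. The factor `exp (2μc/v)` turns the Gaussian
density at `μ√t + c/√t` into the one at `μ√t - c/√t`, so that the `μ` parts of the two chain rule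
terms cancel and their `c` parts add up. Up to an additive constant this is the probability that a
Brownian motion with drift `μ` has reached level `c` by time `t`, as given by the reflection
principle. For `μ ≥ 0` the primitive increases by exactly `1` over `(0, ∞)`, and replacing `μ`, `c`
by their absolute values multiplies the density by a constant, which is `1` when `μ c ≥ 0`.
-/

open Filter ProbabilityTheory Set Topology
open scoped NNReal

theorem hasDerivAt_setIntegral_Iic {E : Type*} [NormedAddCommGroup E] [NormedSpace ℝ E]
    [CompleteSpace E] {f : ℝ → E} {x : ℝ} (hf : Integrable f) (hx : ContinuousAt f x) :
    HasDerivAt (fun y ↦ ∫ u in Iic y, f u) (f x) x := by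
  have hsplit (y : ℝ) : ∫ u in Iic y, f u = (∫ u in Iic 0, f u) + ∫ u in (0)..y, f u := by
    rw [← intervalIntegral.integral_Iic_sub_Iic hf.integrableOn hf.integrableOn,
      add_sub_cancel]
  rw [funext hsplit]
  exact (intervalIntegral.integral_hasDerivAt_right hf.intervalIntegrable
    hf.aestronglyMeasurable.stronglyMeasurableAtFilter hx).const_add _

theorem integral_Ioi_of_hasDerivAt_of_nonneg_of_tendsto {g g' : ℝ → ℝ} {a l m : ℝ}
    (hderiv : ∀ x ∈ Ioi a, HasDerivAt g (g' x) x) (hnonneg : ∀ x ∈ Ioi a, 0 ≤ g' x)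
    (ha : Tendsto g (𝓝[>] a) (𝓝 l)) (htop : Tendsto g atTop (𝓝 m)) :
    ∫ x in Ioi a, g' x = m - l := by
  have hcont : ContinuousWithinAt (Function.update g a l) (Ici a) a := by
    rwa [continuousWithinAt_update_same, Ici_sdiff_left]
  have hderiv' (x : ℝ) (hx : x ∈ Ioi a) : HasDerivAt (Function.update g a l) (g' x) x :=
    (hderiv x hx).congr_of_eventuallyEq <|
      (eventually_ne_nhds (ne_of_gt hx)).mono fun _ hy ↦ Function.update_of_ne hy _ _
  have htop' : Tendsto (Function.update g a l) atTop (𝓝 m) :=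
    htop.congr' <| (eventually_ne_atTop a).mono fun _ hy ↦ (Function.update_of_ne hy _ _).symm
  simpa only [Function.update_self] using
    integral_Ioi_of_hasDerivAt_of_nonneg hcont hderiv' hnonneg htop'

section Gaussian

variable {v : ℝ≥0}

theorem continuous_gaussianPDFReal (m : ℝ) (v : ℝ≥0) : Continuous (gaussianPDFReal m v) := by
  unfold gaussianPDFReal
  fun_prop

theorem cdf_gaussianReal_eq_integral (m : ℝ) (hv : v ≠ 0) (x : ℝ) :
    cdf (gaussianReal m v) x = ∫ u in Iic x, gaussianPDFReal m v u := by
  rw [cdf_eq_real, measureReal_def, gaussianReal_apply_eq_integral m hv, ENNReal.toReal_ofReal]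
  exact integral_nonneg fun u ↦ gaussianPDFReal_nonneg m v u

theorem hasDerivAt_cdf_gaussianReal (m : ℝ) (hv : v ≠ 0) (x : ℝ) :
    HasDerivAt (cdf (gaussianReal m v)) (gaussianPDFReal m v x) x := by
  rw [funext (cdf_gaussianReal_eq_integral m hv)]
  exact hasDerivAt_setIntegral_Iic (integrable_gaussianPDFReal m v)
    (continuous_gaussianPDFReal m v).continuousAt

theorem exp_mul_gaussianPDFReal_zero_add (v : ℝ≥0) (x y : ℝ) :
    exp (2 * (x * y) / v) * gaussianPDFReal 0 v (x + y) = gaussianPDFReal 0 v (x - y) := by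
  simp only [gaussianPDFReal, sub_zero]
  rw [mul_left_comm, ← exp_add]
  congr 2
  field

end Gaussian

section InverseGaussian

variable {μ c t : ℝ} {v : ℝ≥0}

/-- The inverse Gaussian density: the density at time `t` of the first passage to level `c` of a
Brownian motion with drift `μ` and variance `v` per unit time. For `μ c < 0` it is defective, that
is, of total mass less than `1`. -/
noncomputable def inverseGaussianPDFReal (μ c : ℝ) (v : ℝ≥0) (t : ℝ) : ℝ :=
  |c| / √(2 * π * v * t ^ 3) * exp (-(μ * t - c) ^ 2 / (2 * v * t))

theorem inverseGaussianPDFReal_nonneg (μ c : ℝ) (v : ℝ≥0) (t : ℝ) :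
    0 ≤ inverseGaussianPDFReal μ c v t := by
  unfold inverseGaussianPDFReal
  positivity

theorem inverseGaussianPDFReal_eq_gaussianPDFReal (μ c : ℝ) (v : ℝ≥0) (ht : 0 < t) :
    inverseGaussianPDFReal μ c v t =
      |c| / √t ^ 3 * gaussianPDFReal 0 v (μ * √t - c / √t) := by
  obtain ⟨s, hs, rfl⟩ : ∃ s, 0 < s ∧ t = s ^ 2 := ⟨√t, sqrt_pos.2 ht, (sq_sqrt ht.le).symm⟩
  have hsqrt : √(2 * π * v * (s ^ 2) ^ 3) = √(2 * π * v) * s ^ 3 := by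
    rw [sqrt_mul (by positivity), pow_right_comm, sqrt_sq (by positivity)]
  have hexp : -(μ * s ^ 2 - c) ^ 2 / (2 * v * s ^ 2) = -(μ * s - c / s) ^ 2 / (2 * v) := by
    field
  rw [inverseGaussianPDFReal, gaussianPDFReal, hsqrt, hexp, sqrt_sq hs.le, sub_zero]
  field

theorem inverseGaussianPDFReal_eq_exp_mul_abs (μ c : ℝ) (v : ℝ≥0) (ht : 0 < t) :
    inverseGaussianPDFReal μ c v t =
      exp ((μ * c - |μ * c|) / v) * inverseGaussianPDFReal |μ| |c| v t := by
  have hsq : (μ * t - c) ^ 2 = (|μ| * t - |c|) ^ 2 - 2 * t * (μ * c - |μ * c|) := by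
    rw [abs_mul]
    linear_combination -t ^ 2 * sq_abs μ - sq_abs c
  have hexp : -(μ * t - c) ^ 2 / (2 * v * t) =
      (μ * c - |μ * c|) / v + -(|μ| * t - |c|) ^ 2 / (2 * v * t) := by
    rw [hsq]
    field
  rw [inverseGaussianPDFReal, inverseGaussianPDFReal, hexp, exp_add, abs_abs, mul_left_comm]

/-- The primitive of the inverse Gaussian density for `0 ≤ c`. It is normalised to be the
distribution function minus the constant `exp (2 * (μ * c) / v)`, so that its limits do not involve
the symmetry of the Gaussian distribution. -/
noncomputable def inverseGaussianPrimitive (μ c : ℝ) (v : ℝ≥0) (t : ℝ) : ℝ :=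
  cdf (gaussianReal 0 v) (μ * √t - c / √t) -
    exp (2 * (μ * c) / v) * cdf (gaussianReal 0 v) (μ * √t + c / √t)

theorem hasDerivAt_inverseGaussianPrimitive (μ : ℝ) (hc : 0 ≤ c) (hv : v ≠ 0) (ht : 0 < t) :
    HasDerivAt (inverseGaussianPrimitive μ c v) (inverseGaussianPDFReal μ c v t) t := by
  have hs : √t ≠ 0 := (sqrt_pos.2 ht).ne'
  have hdrift := (hasDerivAt_sqrt ht.ne').const_mul μ
  have hlevel : HasDerivAt (fun t ↦ c / √t) (c * (-(1 / (2 * √t)) / √t ^ 2)) t :=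
    ((hasDerivAt_sqrt ht.ne').inv hs).const_mul c
  have hsub := (hasDerivAt_cdf_gaussianReal 0 hv (μ * √t - c / √t)).comp t (hdrift.sub hlevel)
  have hadd := (hasDerivAt_cdf_gaussianReal 0 hv (μ * √t + c / √t)).comp t (hdrift.add hlevel)
  have hprod : μ * √t * (c / √t) = μ * c := by field
  have hpdf : exp (2 * (μ * c) / v) * gaussianPDFReal 0 v (μ * √t + c / √t) =
      gaussianPDFReal 0 v (μ * √t - c / √t) := by
    rw [← exp_mul_gaussianPDFReal_zero_add v, hprod]
  refine (hsub.sub (hadd.const_mul (exp (2 * (μ * c) / v)))).congr_deriv ?_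
  rw [← mul_assoc, hpdf, inverseGaussianPDFReal_eq_gaussianPDFReal μ c v ht, abs_of_nonneg hc]
  field

theorem tendsto_inverseGaussianPrimitive_nhdsGT_zero (μ : ℝ) (hc : 0 < c) (v : ℝ≥0) :
    Tendsto (inverseGaussianPrimitive μ c v) (𝓝[>] 0) (𝓝 (-exp (2 * (μ * c) / v))) := by
  have hsqrt : Tendsto (√·) (𝓝[>] 0) (𝓝 0) := by
    simpa only [sqrt_zero] using (continuous_sqrt.tendsto 0).mono_left nhdsWithin_le_nhds
  have hsqrt_pos : ∀ᶠ t : ℝ in 𝓝[>] 0, √t ∈ Ioi 0 :=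
    eventually_mem_nhdsWithin.mono fun _ ht ↦ sqrt_pos.2 ht
  have hdrift : Tendsto (fun t ↦ μ * √t) (𝓝[>] 0) (𝓝 0) := by
    simpa only [mul_zero] using hsqrt.const_mul μ
  have hlevel : Tendsto (fun t ↦ c / √t) (𝓝[>] 0) atTop :=
    (tendsto_inv_nhdsGT_zero.comp
      (tendsto_nhdsWithin_iff.2 ⟨hsqrt, hsqrt_pos⟩)).const_mul_atTop hc
  have hsub : Tendsto (fun t ↦ μ * √t - c / √t) (𝓝[>] 0) atBot := by
    simpa only [sub_eq_add_neg, Function.comp_def] using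
      hdrift.add_atBot (tendsto_neg_atTop_atBot.comp hlevel)
  have hbot := (tendsto_cdf_atBot (gaussianReal 0 v)).comp hsub
  have htop := (tendsto_cdf_atTop (gaussianReal 0 v)).comp (hdrift.add_atTop hlevel)
  unfold inverseGaussianPrimitive
  simpa only [mul_one, zero_sub, Function.comp_def] using
    hbot.sub (htop.const_mul (exp (2 * (μ * c) / v)))

theorem tendsto_inverseGaussianPrimitive_atTop (hμ : 0 ≤ μ) (c : ℝ) (hv : v ≠ 0) :
    Tendsto (inverseGaussianPrimitive μ c v) atTop (𝓝 (1 - exp (2 * (μ * c) / v))) := by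
  unfold inverseGaussianPrimitive
  have hlevel : Tendsto (fun t ↦ c / √t) atTop (𝓝 0) := tendsto_sqrt_atTop.const_div_atTop c
  obtain rfl | hμ := hμ.eq_or_lt
  · have hcdf := (hasDerivAt_cdf_gaussianReal 0 hv 0).continuousAt.tendsto
    simpa [Function.comp_def] using
      (hcdf.comp (by simpa only [neg_zero] using hlevel.neg)).sub (hcdf.comp hlevel)
  · have hdrift : Tendsto (fun t ↦ μ * √t) atTop atTop :=
      tendsto_sqrt_atTop.const_mul_atTop hμ
    have hsub : Tendsto (fun t ↦ μ * √t - c / √t) atTop atTop := by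
      simpa only [sub_eq_add_neg] using hdrift.atTop_add hlevel.neg
    have hcdf := tendsto_cdf_atTop (gaussianReal 0 v)
    simpa only [mul_one, Function.comp_def] using (hcdf.comp hsub).sub
      ((hcdf.comp (hdrift.atTop_add hlevel)).const_mul (exp (2 * (μ * c) / v)))

theorem integral_inverseGaussianPDFReal_of_nonneg_of_pos (hμ : 0 ≤ μ) (hc : 0 < c) (hv : v ≠ 0) :
    ∫ t in Ioi 0, inverseGaussianPDFReal μ c v t = 1 := by
  rw [integral_Ioi_of_hasDerivAt_of_nonneg_of_tendsto
    (fun t ht ↦ hasDerivAt_inverseGaussianPrimitive μ hc.le hv ht)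
    (fun t _ ↦ inverseGaussianPDFReal_nonneg μ c v t)
    (tendsto_inverseGaussianPrimitive_nhdsGT_zero μ hc v)
    (tendsto_inverseGaussianPrimitive_atTop hμ c hv)]
  ring

theorem integral_inverseGaussianPDFReal (μ : ℝ) (hc : c ≠ 0) (hv : v ≠ 0) :
    ∫ t in Ioi 0, inverseGaussianPDFReal μ c v t = exp ((μ * c - |μ * c|) / v) := by
  rw [setIntegral_congr_fun measurableSet_Ioi fun t ht ↦
      inverseGaussianPDFReal_eq_exp_mul_abs μ c v ht, integral_const_mul,
    integral_inverseGaussianPDFReal_of_nonneg_of_pos (abs_nonneg μ) (abs_pos.2 hc) hv, mul_one]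

end InverseGaussian

theorem stmt3_general (μ c σ : ℝ) (hc : c ≠ 0) (hσ : 0 < σ) :
    ∫ t in Set.Ioi (0 : ℝ),
      |c| / (σ * Real.sqrt (2 * π * t ^ 3)) *
        Real.exp (-(μ * t - c) ^ 2 / (2 * σ ^ 2 * t)) =
      exp ((μ * c - |μ * c|) / σ ^ 2) := by
  lift σ to ℝ≥0 using hσ.le
  have hsqrt (t : ℝ) : √(2 * π * σ ^ 2 * t ^ 3) = σ * √(2 * π * t ^ 3) := by
    rw [mul_right_comm, mul_comm, sqrt_mul (sq_nonneg _), sqrt_sq hσ.le]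
  have hvar : σ ^ 2 ≠ 0 := pow_ne_zero 2 (NNReal.coe_pos.1 hσ).ne'
  simpa only [inverseGaussianPDFReal, NNReal.coe_pow, hsqrt] using
    integral_inverseGaussianPDFReal μ hc hvar

/-- The inverse Gaussian first-passage density with parameters `μ`, `c ≠ 0`, `σ > 0`
integrates to `1` over `(0, ∞)` when `μ c ≥ 0`. -/
theorem stmt3 (μ c σ : ℝ) (hc : c ≠ 0) (hσ : 0 < σ) (hμc : 0 ≤ μ * c) :
    ∫ t in Set.Ioi (0 : ℝ),
      |c| / (σ * Real.sqrt (2 * π * t ^ 3)) *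
        Real.exp (-(μ * t - c) ^ 2 / (2 * σ ^ 2 * t)) = 1 := by
  rw [stmt3_general μ c σ hc hσ, abs_of_nonneg hμc, sub_self, zero_div, exp_zero]
end

section
/- Let c ≠ 0, σ > 0, and let Z be a standard normal random variable. Then the random variable c² / (σ²Z²) is almost surely well defined and its law is absolutely continuous with density t ↦ |c| / (σ√(2πt³)) · exp(−c² / (2σ²t)) on (0,∞) (and 0 on (−∞,0]); that is, c²/(σ²Z²) has the inverse Gaussian first-passage density with parameters μ = 0, c, σ. -/
open MeasureTheory ProbabilityTheory Real

/-!
Since `z ↦ a / z ^ 2` is even, a centred Gaussian measure has the same image under it as twice its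
restriction to `(0, ∞)`. There the map is a decreasing bijection onto `(0, ∞)` with Jacobian
`2 * a / z ^ 3`, so the change of variables formula gives the density of the image. The theorem is
the case `a = c ^ 2 / σ ^ 2`.
-/

section ChangeOfVariables

open Set

theorem map_eq_map_restrict_Ioi_two_smul_of_even {G β : Type*} [AddCommGroup G] [LinearOrder G]
    [IsOrderedAddMonoid G] [TopologicalSpace G] [OrderClosedTopology G] [MeasurableSpace G]
    [OpensMeasurableSpace G] [MeasurableNeg G] [MeasurableSpace β] (μ : Measure G)
    [μ.IsNegInvariant] (hμ : μ {0} = 0) {g : G → β} (hg : Measurable g) (heven : g.Even) :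
    μ.map g = (((2 : ENNReal) • μ).restrict (Ioi 0)).map g := by
  have hneg : (μ.restrict (Iio 0)).map g = (μ.restrict (Ioi 0)).map g := by
    have hrefl : (μ.restrict (Ioi 0)).map Neg.neg = μ.restrict (Iio 0) := by
      simpa using ((Measure.measurePreserving_neg μ).restrict_preimage
        (measurableSet_Iio (a := (0 : G)))).map_eq
    rw [← hrefl, Measure.map_map hg measurable_neg]
    congr 1
    exact funext heven
  have hsplit : μ = μ.restrict (Iio 0) + μ.restrict (Ioi 0) := by
    have hIci : μ.restrict (Ici 0) = μ.restrict (Ioi 0) :=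
      Measure.restrict_congr_set (Ioi_ae_eq_Ici' hμ).symm
    rw [← hIci, ← compl_Iio, Measure.restrict_add_restrict_compl measurableSet_Iio]
  conv_lhs => rw [hsplit]
  rw [Measure.map_add _ _ hg, hneg, Measure.restrict_smul, Measure.map_smul, two_smul]

theorem map_restrict_withDensity_eq_restrict_withDensity_image {E : Type*} [NormedAddCommGroup E]
    [NormedSpace ℝ E] [FiniteDimensional ℝ E] [MeasurableSpace E] [BorelSpace E]
    (μ : Measure E) [μ.IsAddHaarMeasure] {s : Set E} (hs : MeasurableSet s) {g : E → E}
    {g' : E → E →L[ℝ] E} (hg : Measurable g) (hg' : ∀ x ∈ s, HasFDerivWithinAt g (g' x) s x)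
    (hinj : InjOn g s) {f h : E → ENNReal}
    (hfh : ∀ x ∈ s, f x = ENNReal.ofReal |(g' x).det| * h (g x)) :
    ((μ.withDensity f).restrict s).map g = (μ.withDensity h).restrict (g '' s) := by
  ext A hA
  have himage : A ∩ g '' s = g '' (g ⁻¹' A ∩ s) := (image_preimage_inter g s A).symm
  have hpre : MeasurableSet (g ⁻¹' A ∩ s) := (hg hA).inter hs
  have hsub : g ⁻¹' A ∩ s ⊆ s := inter_subset_right
  rw [Measure.map_apply hg hA, Measure.restrict_apply (hg hA), Measure.restrict_apply hA, himage,
    withDensity_apply _ hpre, withDensity_apply',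
    lintegral_image_eq_lintegral_abs_det_fderiv_mul μ hpre
      (fun x hx ↦ (hg' x (hsub hx)).mono hsub) (hinj.mono hsub)]
  exact setLIntegral_congr_fun hpre fun x hx ↦ hfh x (hsub hx)

end ChangeOfVariables

instance isNegInvariant_gaussianReal_zero_s5 (v : NNReal) : (gaussianReal 0 v).IsNegInvariant where
  neg_eq_self := gaussianReal_map_neg.trans (by rw [neg_zero])

/-- The density of the Lévy distribution with scale `γ`, that is, the inverse Gaussian
first-passage density with parameters `μ = 0` and `c`, `σ` such that `γ = c² / σ²`. -/
noncomputable def levyPDFReal (γ t : ℝ) : ℝ :=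
  if 0 < t then √(γ / (2 * π * t ^ 3)) * exp (-γ / (2 * t)) else 0

theorem levyPDFReal_sq_div_sq (c : ℝ) {σ : ℝ} (hσ : 0 < σ) (t : ℝ) :
    levyPDFReal (c ^ 2 / σ ^ 2) t =
      if 0 < t then |c| / (σ * √(2 * π * t ^ 3)) * exp (-c ^ 2 / (2 * σ ^ 2 * t)) else 0 := by
  refine if_congr Iff.rfl ?_ rfl
  have hsqrt : √(c ^ 2 / σ ^ 2 / (2 * π * t ^ 3)) = |c| / (σ * √(2 * π * t ^ 3)) := by
    rw [sqrt_div (by positivity), sqrt_div (sq_nonneg c), sqrt_sq_eq_abs, sqrt_sq hσ.le, div_div]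
  have hexp : -(c ^ 2 / σ ^ 2) / (2 * t) = -c ^ 2 / (2 * σ ^ 2 * t) := by
    rw [← neg_div, div_div]
    ring_nf
  rw [hsqrt, hexp]

theorem restrict_Ioi_withDensity_levyPDFReal (γ : ℝ) :
    (volume.withDensity fun t ↦ ENNReal.ofReal (levyPDFReal γ t)).restrict (Set.Ioi 0) =
      volume.withDensity fun t ↦ ENNReal.ofReal (levyPDFReal γ t) := by
  rw [restrict_withDensity measurableSet_Ioi, ← withDensity_indicator measurableSet_Ioi]
  congr 1
  refine Set.indicator_eq_self.mpr fun t ht ↦ ?_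
  by_contra hnot
  exact ht (by simp [levyPDFReal, show ¬ 0 < t from hnot])

theorem hasDerivAt_const_div_sq (a : ℝ) {z : ℝ} (hz : z ≠ 0) :
    HasDerivAt (fun z ↦ a / z ^ 2) (-(2 * a / z ^ 3)) z := by
  refine ((hasDerivAt_const z a).fun_div (hasDerivAt_pow 2 z) (pow_ne_zero 2 hz)).congr_deriv ?_
  field_simp
  push_cast
  ring

theorem injOn_const_div_sq_Ioi {a : ℝ} (ha : a ≠ 0) :
    Set.InjOn (fun z : ℝ ↦ a / z ^ 2) (Set.Ioi 0) := fun x hx y hy hxy ↦ by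
  have hsq : x ^ 2 = y ^ 2 := by simpa [div_eq_mul_inv, ha] using hxy
  exact (sq_eq_sq₀ (le_of_lt hx) (le_of_lt hy)).mp hsq

theorem image_const_div_sq_Ioi {a : ℝ} (ha : 0 < a) :
    (fun z : ℝ ↦ a / z ^ 2) '' Set.Ioi 0 = Set.Ioi 0 := by
  refine Set.Subset.antisymm ?_ fun t ht ↦ ⟨√(a / t), sqrt_pos.mpr (div_pos ha ht), ?_⟩
  · rintro _ ⟨z, hz, rfl⟩
    exact div_pos ha (pow_pos hz 2)
  · simp only [sq_sqrt (div_pos ha ht).le, div_div_cancel₀ ha.ne']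

theorem two_mul_gaussianPDFReal_eq_mul_levyPDFReal {a : ℝ} (ha : 0 < a) (v : NNReal) {z : ℝ}
    (hz : 0 < z) :
    2 * gaussianPDFReal 0 v z = 2 * a / z ^ 3 * levyPDFReal (a / v) (a / z ^ 2) := by
  have hsqrt : √(a / v / (2 * π * (a / z ^ 2) ^ 3)) = z ^ 3 / a * (√(2 * π * v))⁻¹ := by
    rw [show a / v / (2 * π * (a / z ^ 2) ^ 3) = (z ^ 3 / a) ^ 2 * (2 * π * v)⁻¹ by field_simp,
      sqrt_mul (by positivity), sqrt_sq (by positivity), sqrt_inv]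
  have hexp : -(a / v) / (2 * (a / z ^ 2)) = -z ^ 2 / (2 * v) := by field_simp
  rw [levyPDFReal, if_pos (by positivity), hsqrt, hexp, gaussianPDFReal, sub_zero]
  field_simp

theorem map_const_div_sq_gaussianReal {a : ℝ} (ha : 0 < a) {v : NNReal} (hv : v ≠ 0) :
    (gaussianReal 0 v).map (fun z ↦ a / z ^ 2) =
      volume.withDensity fun t ↦ ENNReal.ofReal (levyPDFReal (a / v) t) := by
  have hg : Measurable fun z : ℝ ↦ a / z ^ 2 := by fun_prop
  have := nullSingletonClass_gaussianReal (μ := 0) hv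
  have hjacobian (z : ℝ) (hz : 0 < z) : ((2 : ENNReal) • gaussianPDF 0 v) z =
      ENNReal.ofReal |(ContinuousLinearMap.toSpanSingleton ℝ (-(2 * a / z ^ 3))).det| *
        ENNReal.ofReal (levyPDFReal (a / v) (a / z ^ 2)) := by
    rw [ContinuousLinearMap.det_toSpanSingleton, abs_neg, abs_of_pos (by positivity),
      ← ENNReal.ofReal_mul (by positivity), ← two_mul_gaussianPDFReal_eq_mul_levyPDFReal ha v hz,
      ENNReal.ofReal_mul zero_le_two, ENNReal.ofReal_ofNat]
    rfl
  rw [map_eq_map_restrict_Ioi_two_smul_of_even _ (measure_singleton 0) hg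
      fun z ↦ by simp only [neg_sq],
    gaussianReal_of_var_ne_zero 0 hv, ← withDensity_smul _ (measurable_gaussianPDF 0 v),
    map_restrict_withDensity_eq_restrict_withDensity_image volume measurableSet_Ioi hg
      (fun z hz ↦ (hasDerivAt_const_div_sq a (ne_of_gt hz)).hasFDerivAt.hasFDerivWithinAt)
      (injOn_const_div_sq_Ioi ha.ne') (h := fun t ↦ ENNReal.ofReal (levyPDFReal (a / v) t))
      hjacobian,
    image_const_div_sq_Ioi ha, restrict_Ioi_withDensity_levyPDFReal]

/-- If `Z` is standard normal, `c ≠ 0` and `σ > 0`, then `c² / (σ² Z²)` is almost surely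
well defined (`Z ≠ 0` a.s.) and its law has the inverse Gaussian first-passage density
with parameters `μ = 0`, `c`, `σ`, namely `t ↦ |c| / (σ √(2 π t³)) · exp(−c² / (2 σ² t))`
on `(0, ∞)` and `0` on `(−∞, 0]`. -/
theorem stmt5 {Ω : Type*} [MeasurableSpace Ω] (P : Measure Ω) [IsProbabilityMeasure P]
    (c σ : ℝ) (hc : c ≠ 0) (hσ : 0 < σ)
    (Z : Ω → ℝ) (hZm : Measurable Z) (hZ : Measure.map Z P = gaussianReal 0 1) :
    (∀ᵐ ω ∂P, Z ω ≠ 0) ∧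
    Measure.map (fun ω => c ^ 2 / (σ ^ 2 * (Z ω) ^ 2)) P
      = volume.withDensity (fun t =>
        ENNReal.ofReal (if 0 < t then
          |c| / (σ * Real.sqrt (2 * π * t ^ 3)) * Real.exp (-c ^ 2 / (2 * σ ^ 2 * t))
        else 0)) := by
  constructor
  · have := nullSingletonClass_gaussianReal (μ := 0) one_ne_zero
    exact ae_of_ae_map hZm.aemeasurable (hZ ▸ Measure.ae_ne (gaussianReal 0 1) 0)
  · have hscale : 0 < c ^ 2 / σ ^ 2 := by positivity
    calc
      P.map (fun ω ↦ c ^ 2 / (σ ^ 2 * Z ω ^ 2))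
        = (P.map Z).map (fun z ↦ c ^ 2 / σ ^ 2 / z ^ 2) := by
          rw [Measure.map_map (by fun_prop) hZm]
          simp only [Function.comp_def, div_div]
      _ = volume.withDensity (fun t ↦ ENNReal.ofReal (levyPDFReal (c ^ 2 / σ ^ 2) t)) := by
          rw [hZ, map_const_div_sq_gaussianReal hscale one_ne_zero, NNReal.coe_one, div_one]
      _ = _ := by simp only [levyPDFReal_sq_div_sq c hσ]
end

section
/- Let N ≥ 1 and for each i ∈ {1,…,N} let μᵢ ≠ 0, cᵢ ≠ 0, σᵢ > 0 with μᵢcᵢ > 0, and set Hᵢ(t) = (μᵢt − cᵢ)² / (σᵢ²t). Let T = (T₁,…,T_N) be a random vector with values in (0,∞)^N whose law has a continuous, strictly positive density f on (0,∞)^N with respect to Lebesgue measure. For each i set Vᵢ = Hᵢ(Tᵢ), X_{i1} = cᵢ/μᵢ + σᵢ²Vᵢ/(2μᵢ²) − (σᵢ√Vᵢ/(2μᵢ²))·√(4μᵢcᵢ + σᵢ²Vᵢ) and X_{i2} = cᵢ² / (μᵢ²X_{i1}). For u = (u₁,…,u_N) ∈ {1,2}^N let a_u = f(X_{1u₁},…,X_{Nu_N})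 · ∏ᵢ |Hᵢ′(X_{iu_i})|⁻¹ and p_u = a_u / Σ_{v∈{1,2}^N} a_v (these are almost surely well defined). Fix an enumeration u⁽¹⁾,…,u⁽²^N⁾ of {1,2}^N and let I_{u⁽ᵏ⁾} = [Σ_{j<k} p_{u⁽ʲ⁾}, Σ_{j≤k} p_{u⁽ʲ⁾}). Let U be uniform on [0,1] and independent of T. Then the random vector Σ_{u∈{1,2}^N} (X_{1u₁},…,X_{Nu_N}) · 1{U ∈ I_u} has the same distribution as T. -/
open MeasureTheory ProbabilityTheory Real

/-!
For each coordinate, `Hᵢ` is invariant under the involution `τᵢ t = (cᵢ/μᵢ)² / t`, hence so is the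
measure `|Hᵢ'(t)| dt`. The group `(ℤ/2)^N` generated by the `τᵢ` therefore preserves the product
measure `ρ = ∏ᵢ |Hᵢ'(tᵢ)| dtᵢ`. The points `X_u` form the orbit of `T` under this group, and `a_u`
is the value at `X_u` of the density `q` of the law of `T` with respect to `ρ`. Choosing a point of
the orbit of `T` with probabilities proportional to `q` preserves `q ρ`: by invariance of `ρ`, the
mass carried from `g⁻¹x` to `x` is `q(g⁻¹x) q(x) / ∑_h q(hx)`, and summing over `g` gives `q(x)`.
-/

section OrbitWeight

variable {G α : Type*} [AddGroup G] [Fintype G] [AddAction G α]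

/-- The probability of moving from `x` to `g +ᵥ x` when a group element is chosen with probability
proportional to the value of `q` at the point it leads to. It is `0` by the convention `r / 0 = 0`
if the values of `q` on the orbit sum to `0`. -/
noncomputable def orbitWeight (q : α → ℝ) (x : α) (g : G) : ℝ :=
  q (g +ᵥ x) / ∑ h : G, q (h +ᵥ x)

theorem sum_vadd_vadd {M : Type*} [AddCommMonoid M] (φ : α → M) (g : G) (x : α) :
    ∑ h : G, φ (h +ᵥ (g +ᵥ x)) = ∑ h : G, φ (h +ᵥ x) := by
  simp only [← add_vadd]
  exact Equiv.sum_comp (Equiv.addRight g) fun h => φ (h +ᵥ x)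

theorem orbitWeight_vadd (q : α → ℝ) (g h : G) (x : α) :
    orbitWeight q (g +ᵥ x) h = orbitWeight q x (h + g) := by
  simp only [orbitWeight, sum_vadd_vadd, add_vadd]

theorem orbitWeight_nonneg {q : α → ℝ} (hq : ∀ x, 0 ≤ q x) (x : α) (g : G) :
    0 ≤ orbitWeight q x g :=
  div_nonneg (hq _) (Finset.sum_nonneg fun _ _ => hq _)

theorem sum_orbitWeight {q : α → ℝ} (hq : ∀ x, 0 ≤ q x) {x : α} (hx : 0 < q x) :
    ∑ g : G, orbitWeight q x g = 1 := by
  simp only [orbitWeight, ← Finset.sum_div]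
  refine div_self (Finset.sum_pos' (fun _ _ => hq _) ⟨0, Finset.mem_univ _, ?_⟩).ne'
  rwa [zero_vadd]

theorem sum_orbitWeight_mul_eq_of_mem_orbit (q : α → ℝ) (φ : α → ENNReal) {x y : α}
    (hy : y ∈ AddAction.orbit G x) :
    ∑ g : G, ENNReal.ofReal (orbitWeight q y g) * φ (g +ᵥ y)
      = ∑ g : G, ENNReal.ofReal (orbitWeight q x g) * φ (g +ᵥ x) := by
  obtain ⟨h, rfl⟩ := hy
  simp only [orbitWeight_vadd, ← add_vadd]
  exact Equiv.sum_comp (Equiv.addRight h)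
    fun g => ENNReal.ofReal (orbitWeight q x g) * φ (g +ᵥ x)

variable [MeasurableSpace α]

section MeasurableConstVAdd

variable [MeasurableConstVAdd G α]

@[fun_prop]
theorem measurable_orbitWeight {q : α → ℝ} (hq : Measurable q) (g : G) :
    Measurable fun x => orbitWeight q x g := by
  have hq_vadd (h : G) : Measurable fun x => q (h +ᵥ x) := hq.comp (measurable_const_vadd h)
  exact (hq_vadd g).div (Finset.measurable_sum _ fun h _ => hq_vadd h)

theorem lintegral_sum_orbitWeight_mul (ρ : Measure α) [VAddInvariantMeasure G α ρ] {q : α → ℝ}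
    (hq : Measurable q) (hq0 : ∀ x, 0 ≤ q x) {φ : α → ENNReal} (hφ : Measurable φ) :
    ∫⁻ x, ∑ g : G, ENNReal.ofReal (orbitWeight q x g) * φ (g +ᵥ x)
        ∂ρ.withDensity (fun x => ENNReal.ofReal (q x))
      = ∫⁻ x, φ x ∂ρ.withDensity (fun x => ENNReal.ofReal (q x)) := by
  have hflow (g : G) :
      ∫⁻ x, ENNReal.ofReal (q x) * (ENNReal.ofReal (orbitWeight q x g) * φ (g +ᵥ x)) ∂ρ
        = ∫⁻ x, ENNReal.ofReal (q (-g +ᵥ x)) *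
            (ENNReal.ofReal (orbitWeight q x (0 : G)) * φ x) ∂ρ := by
    conv_rhs =>
      rw [← (measurePreserving_vadd g ρ).lintegral_comp_emb (measurableEmbedding_const_vadd g)]
    simp only [neg_vadd_vadd, orbitWeight_vadd, zero_add]
  have htotal (x : α) :
      ∑ g : G, ENNReal.ofReal (q (-g +ᵥ x)) * (ENNReal.ofReal (orbitWeight q x (0 : G)) * φ x)
        = ENNReal.ofReal (q x) * φ x := by
    have hneg : ∑ g : G, q (-g +ᵥ x) = ∑ g : G, q (g +ᵥ x) :=
      Equiv.sum_comp (Equiv.neg G) fun g => q (g +ᵥ x)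
    rw [← Finset.sum_mul, ← ENNReal.ofReal_sum_of_nonneg fun _ _ => hq0 _, hneg, ← mul_assoc,
      ← ENNReal.ofReal_mul (Finset.sum_nonneg fun _ _ => hq0 _), orbitWeight, zero_vadd]
    rcases (hq0 x).eq_or_lt with hx | hx
    · simp [← hx]
    · have hsum : 0 < ∑ g : G, q (g +ᵥ x) :=
        Finset.sum_pos' (fun _ _ => hq0 _) ⟨0, Finset.mem_univ _, by rwa [zero_vadd]⟩
      rw [mul_div_cancel₀ _ hsum.ne']
  rw [lintegral_withDensity_eq_lintegral_mul _ hq.ennreal_ofReal (by fun_prop),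
    lintegral_withDensity_eq_lintegral_mul _ hq.ennreal_ofReal hφ]
  simp only [Pi.mul_apply, Finset.mul_sum]
  rw [lintegral_finsetSum _ fun g _ => by fun_prop]
  simp only [hflow]
  rw [← lintegral_finsetSum _ fun g _ => by fun_prop]
  simp only [htotal]

end MeasurableConstVAdd

end OrbitWeight

section StackedInterval

variable {κ : Type*} [Fintype κ] [LinearOrder κ]

/-- The interval of length `p k` obtained by laying intervals of lengths `p j` end to end from `0`,
in the order of the indices. -/
def stackedInterval (p : κ → ℝ) (k : κ) : Set ℝ :=
  Set.Ico (∑ j with j < k, p j) (∑ j with j < k, p j + p k)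

theorem measurableSet_stackedInterval (p : κ → ℝ) (k : κ) :
    MeasurableSet (stackedInterval p k) :=
  measurableSet_Ico

theorem volume_stackedInterval (p : κ → ℝ) (k : κ) :
    volume (stackedInterval p k) = ENNReal.ofReal (p k) := by
  simp [stackedInterval]

theorem sum_lt_add_eq_sum_le {M : Type*} [AddCommMonoid M] (p : κ → M) (k : κ) :
    ∑ j with j < k, p j + p k = ∑ j with j ≤ k, p j := by
  have hle : ({j | j ≤ k} : Finset κ) = insert k ({j | j < k} : Finset κ) := by
    ext j
    simp [le_iff_eq_or_lt]
  rw [hle, Finset.sum_insert (by simp), add_comm]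

variable {p : κ → ℝ}

theorem pairwise_disjoint_stackedInterval (hp : ∀ k, 0 ≤ p k) :
    Pairwise (Function.onFun Disjoint (stackedInterval p)) := by
  refine (pairwise_disjoint_on _).2 fun j k hjk => Set.Ico_disjoint_Ico.2 ?_
  have hle : ∑ i with i < j, p i + p j ≤ ∑ i with i < k, p i := by
    rw [sum_lt_add_eq_sum_le]
    refine Finset.sum_le_sum_of_subset_of_nonneg (fun i hi => ?_) fun _ _ _ => hp _
    simp only [Finset.mem_filter_univ] at hi ⊢
    exact hi.trans_lt hjk
  exact (min_le_left _ _).trans (hle.trans (le_max_right _ _))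

theorem iUnion_stackedInterval_ae_eq (hp : ∀ k, 0 ≤ p k) :
    (⋃ k, stackedInterval p k) =ᵐ[volume] Set.Icc 0 (∑ k, p k) := by
  have hsubset : (⋃ k, stackedInterval p k) ⊆ Set.Icc 0 (∑ k, p k) := by
    refine Set.iUnion_subset fun k u hu =>
      ⟨(Finset.sum_nonneg fun _ _ => hp _).trans hu.1, hu.2.le.trans ?_⟩
    rw [sum_lt_add_eq_sum_le]
    exact Finset.sum_le_sum_of_subset_of_nonneg (Finset.subset_univ _) fun _ _ _ => hp _
  refine ae_eq_of_subset_of_measure_ge hsubset (le_of_eq ?_)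
    (MeasurableSet.iUnion (measurableSet_stackedInterval p)).nullMeasurableSet (by simp)
  rw [measure_iUnion (pairwise_disjoint_stackedInterval hp) (measurableSet_stackedInterval p),
    tsum_fintype, Real.volume_Icc, sub_zero, ENNReal.ofReal_sum_of_nonneg fun _ _ => hp _]
  simp only [volume_stackedInterval]

open scoped Classical in
theorem sum_ite_stackedInterval {M : Type*} [AddCommMonoid M] (hp : ∀ k, 0 ≤ p k) (x : κ → M)
    {k : κ} {u : ℝ} (hu : u ∈ stackedInterval p k) :
    (∑ j, if u ∈ stackedInterval p j then x j else 0) = x k := by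
  rw [Finset.sum_eq_single k, if_pos hu]
  · exact fun j _ hjk => if_neg fun hj =>
      Set.disjoint_left.1 (pairwise_disjoint_stackedInterval hp hjk) hj hu
  · simp

open scoped Classical in
theorem lintegral_sum_ite_stackedInterval {M : Type*} [AddCommMonoid M] (hp : ∀ k, 0 ≤ p k)
    (x : κ → M) (φ : M → ENNReal) :
    ∫⁻ u in Set.Icc 0 (∑ k, p k), φ (∑ k, if u ∈ stackedInterval p k then x k else 0)
      = ∑ k, ENNReal.ofReal (p k) * φ (x k) := by
  rw [← Measure.restrict_congr_set (iUnion_stackedInterval_ae_eq hp),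
    lintegral_iUnion (measurableSet_stackedInterval p) (pairwise_disjoint_stackedInterval hp),
    tsum_fintype]
  refine Finset.sum_congr rfl fun k _ => ?_
  rw [setLIntegral_congr_fun (measurableSet_stackedInterval p k)
      fun u hu => congrArg φ (sum_ite_stackedInterval hp x hu),
    setLIntegral_const, volume_stackedInterval, mul_comm]

end StackedInterval

section OrbitSample

variable {G α κ : Type*} [AddGroup G] [Fintype G] [AddAction G α] [AddCommMonoid α]
  [Fintype κ] [LinearOrder κ]

open scoped Classical in
/-- Inverse-transform sampling from the orbit of `x`: for `u` uniform on `[0, 1]`, this is the point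
`g +ᵥ x` with probability `orbitWeight q x g`, the group being enumerated by `e`. -/
noncomputable def orbitSample (e : κ ≃ G) (q : α → ℝ) (u : ℝ) (x : α) : α :=
  ∑ k, if u ∈ stackedInterval (fun j => orbitWeight q x (e j)) k then e k +ᵥ x else 0

theorem lintegral_orbitSample (e : κ ≃ G) {q : α → ℝ} (hq0 : ∀ x, 0 ≤ q x) {x : α}
    (hx : ∑ g : G, orbitWeight q x g = 1) (φ : α → ENNReal) :
    ∫⁻ u in Set.Icc 0 1, φ (orbitSample e q u x)
      = ∑ g : G, ENNReal.ofReal (orbitWeight q x g) * φ (g +ᵥ x) := by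
  have hsum : ∑ k, orbitWeight q x (e k) = 1 := (Equiv.sum_comp e _).trans hx
  rw [← Equiv.sum_comp e, ← hsum]
  exact lintegral_sum_ite_stackedInterval (fun k => orbitWeight_nonneg hq0 x (e k))
    (fun k => e k +ᵥ x) φ

variable [MeasurableSpace α] [MeasurableConstVAdd G α] [MeasurableAdd₂ α]

theorem measurable_orbitSample {β : Type*} [MeasurableSpace β] (e : κ ≃ G) {q : α → ℝ}
    (hq : Measurable q) {u : β → ℝ} (hu : Measurable u) {x : β → α} (hx : Measurable x) :
    Measurable fun b => orbitSample e q (u b) (x b) := by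
  refine Finset.measurable_sum _ fun k _ => Measurable.ite ?_
    ((measurable_const_vadd (e k)).comp hx) measurable_const
  exact (measurableSet_le (by fun_prop) hu).inter (measurableSet_lt hu (by fun_prop))

theorem map_orbitSample_eq {Ω : Type*} [MeasurableSpace Ω] {P : Measure Ω} [IsFiniteMeasure P]
    (e : κ ≃ G) (ρ : Measure α) [VAddInvariantMeasure G α ρ]
    {q : α → ℝ} (hq : Measurable q) (hq0 : ∀ x, 0 ≤ q x)
    {T : Ω → α} (hT : AEMeasurable T P)
    (hlaw : P.map T = ρ.withDensity fun x => ENNReal.ofReal (q x))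
    {U : Ω → ℝ} (hU : AEMeasurable U P) (hU_law : P.map U = volume.restrict (Set.Icc 0 1))
    (hindep : IndepFun U T P)
    {r : α → α} (hr : Measurable r) (hr_orbit : ∀ᵐ x ∂P.map T, r x ∈ AddAction.orbit G x) :
    P.map (fun ω => orbitSample e q (U ω) (r (T ω))) = P.map T := by
  have hZ : Measurable fun z : ℝ × α => orbitSample e q z.1 (r z.2) :=
    measurable_orbitSample e hq measurable_fst (hr.comp measurable_snd)
  have hUT : P.map (fun ω => (U ω, T ω)) = (volume.restrict (Set.Icc 0 1)).prod (P.map T) := by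
    rw [(indepFun_iff_map_prod_eq_prod_map_map hU hT).1 hindep, hU_law]
  have hq_pos : ∀ᵐ x ∂P.map T, 0 < q x := by
    rw [hlaw, ae_withDensity_iff hq.ennreal_ofReal]
    exact Filter.Eventually.of_forall fun x hx => ENNReal.ofReal_pos.1 (pos_iff_ne_zero.2 hx)
  refine Measure.ext_of_lintegral _ fun φ hφ => ?_
  calc ∫⁻ y, φ y ∂P.map (fun ω => orbitSample e q (U ω) (r (T ω)))
      = ∫⁻ z, φ (orbitSample e q z.1 (r z.2)) ∂P.map fun ω => (U ω, T ω) := by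
        rw [← lintegral_map hφ hZ, AEMeasurable.map_map_of_aemeasurable hZ.aemeasurable
          (hU.prodMk hT), Function.comp_def]
    _ = ∫⁻ x, (∫⁻ u in Set.Icc 0 1, φ (orbitSample e q u (r x))) ∂P.map T := by
        rw [hUT]
        exact lintegral_prod_symm' _ (hφ.comp hZ)
    _ = ∫⁻ x, ∑ g : G, ENNReal.ofReal (orbitWeight q x g) * φ (g +ᵥ x) ∂P.map T := by
        refine lintegral_congr_ae ?_
        filter_upwards [hr_orbit, hq_pos] with x ⟨h, hrx⟩ hqx
        have hweight : ∑ g : G, orbitWeight q (r x) g = 1 := by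
          rw [← hrx]
          simp only [orbitWeight_vadd]
          rw [← sum_orbitWeight (G := G) hq0 hqx]
          exact Equiv.sum_comp (Equiv.addRight h) fun g => orbitWeight q x g
        rw [lintegral_orbitSample e hq0 hweight,
          sum_orbitWeight_mul_eq_of_mem_orbit q φ ⟨h, hrx⟩]
    _ = ∫⁻ x, φ x ∂P.map T := by
        rw [hlaw, lintegral_sum_orbitWeight_mul ρ hq hq0 hφ]

end OrbitSample

section PiDensity

theorem lintegral_fin_prod_eq_prod {n : ℕ} {E : Fin n → Type*} {mE : ∀ i, MeasurableSpace (E i)}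
    {m : ∀ i, Measure (E i)} [∀ i, SigmaFinite (m i)]
    {k : ∀ i, E i → ENNReal} (hk : ∀ i, Measurable (k i)) :
    ∫⁻ x, ∏ i, k i (x i) ∂Measure.pi m = ∏ i, ∫⁻ x, k i x ∂m i := by
  induction n with
  | zero => simp
  | succ n ih =>
    have htail : Measurable fun y : ∀ i : Fin n, E i.succ => ∏ i : Fin n, k i.succ (y i) :=
      Finset.measurable_prod _ fun i _ => (hk _).comp (measurable_pi_apply i)
    calc ∫⁻ x, ∏ i, k i (x i) ∂Measure.pi m
        = ∫⁻ z : E 0 × (∀ i : Fin n, E i.succ), k 0 z.1 * ∏ i : Fin n, k i.succ (z.2 i)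
            ∂(m 0).prod (Measure.pi fun i => m i.succ) := by
          rw [← ((measurePreserving_piFinSuccAbove m 0).symm).lintegral_comp_emb
            (MeasurableEquiv.measurableEmbedding _)]
          simp_rw [Fin.prod_univ_succ]
          rfl
      _ = ∏ i, ∫⁻ x, k i x ∂m i := by
          rw [lintegral_prod_mul (hk 0).aemeasurable htail.aemeasurable,
            ih fun i => hk i.succ, Fin.prod_univ_succ]

variable {ι : Type*} [Fintype ι]

theorem lintegral_fintype_prod_eq_prod {E : ι → Type*} {mE : ∀ i, MeasurableSpace (E i)}
    {m : ∀ i, Measure (E i)} [∀ i, SigmaFinite (m i)]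
    {k : ∀ i, E i → ENNReal} (hk : ∀ i, Measurable (k i)) :
    ∫⁻ x, ∏ i, k i (x i) ∂Measure.pi m = ∏ i, ∫⁻ x, k i x ∂m i := by
  let e := (Fintype.equivFin ι).symm
  rw [(measurePreserving_piCongrLeft m e).lintegral_map_equiv]
  simp_rw [← e.prod_comp, MeasurableEquiv.coe_piCongrLeft, Equiv.piCongrLeft_apply_apply]
  exact lintegral_fin_prod_eq_prod fun i => hk (e i)

theorem pi_withDensity {E : ι → Type*} {mE : ∀ i, MeasurableSpace (E i)}
    (m : ∀ i, Measure (E i)) [∀ i, SigmaFinite (m i)]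
    {k : ∀ i, E i → ENNReal} (hk : ∀ i, Measurable (k i))
    [∀ i, SigmaFinite ((m i).withDensity (k i))] :
    Measure.pi (fun i => (m i).withDensity (k i))
      = (Measure.pi m).withDensity fun x => ∏ i, k i (x i) := by
  refine Measure.pi_eq fun s hs => ?_
  rw [withDensity_apply _ (MeasurableSet.univ_pi hs), Measure.restrict_pi_pi,
    lintegral_fintype_prod_eq_prod hk]
  exact Finset.prod_congr rfl fun i _ => (withDensity_apply _ (hs i)).symm

theorem withDensity_ofReal_eq_pi_withDensity_ofReal {f : (ι → ℝ) → ℝ} (hf : Measurable f)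
    {k : ι → ℝ → ℝ} (hk : ∀ i, Measurable (k i)) (hk0 : ∀ i, ∀ᵐ x, k i x ≠ 0) :
    volume.withDensity (fun t => ENNReal.ofReal (f t))
      = (Measure.pi fun i => volume.withDensity fun x => ENNReal.ofReal |k i x|).withDensity
          fun t => ENNReal.ofReal (f t * ∏ i, |k i (t i)|⁻¹) := by
  have hk_abs (i : ι) : Measurable fun x => ENNReal.ofReal |k i x| :=
    (measurable_norm.comp (hk i)).ennreal_ofReal
  have hprod : Measurable fun t : ι → ℝ => ∏ i, ENNReal.ofReal |k i (t i)| :=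
    Finset.measurable_prod _ fun i _ => (hk_abs i).comp (measurable_pi_apply i)
  have hquot : Measurable fun t : ι → ℝ => f t * ∏ i, |k i (t i)|⁻¹ :=
    hf.mul <| Finset.measurable_prod _ fun i _ =>
      (measurable_norm.comp ((hk i).comp (measurable_pi_apply i))).inv
  have hk0_pi : ∀ᵐ t : ι → ℝ, ∀ i, k i (t i) ≠ 0 :=
    ae_all_iff.2 fun i =>
      (Measure.quasiMeasurePreserving_eval (fun _ : ι => (volume : Measure ℝ)) i).ae (hk0 i)
  rw [pi_withDensity _ hk_abs, ← volume_pi, ← withDensity_mul _ hprod hquot.ennreal_ofReal]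
  refine withDensity_congr_ae ?_
  filter_upwards [hk0_pi] with t ht
  have hcancel : (∏ i, |k i (t i)|) * ∏ i, |k i (t i)|⁻¹ = 1 := by
    rw [← Finset.prod_mul_distrib]
    exact Finset.prod_eq_one fun i _ => mul_inv_cancel₀ (abs_ne_zero.2 (ht i))
  rw [Pi.mul_apply, ← ENNReal.ofReal_prod_of_nonneg fun _ _ => abs_nonneg _,
    ← ENNReal.ofReal_mul (Finset.prod_nonneg fun _ _ => abs_nonneg _), mul_left_comm, hcancel,
    mul_one]

end PiDensity

section CoordinateInvolutions

variable {ι : Type*} {E : ι → Type*}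

/-- The action of `(ℤ/2)^ι` on a product that is generated by an involution of each factor: `u` acts
on the `i`-th coordinate by `τ i` if `u i = 1`. The group is encoded as `ι → Fin 2`. -/
abbrev coordinateInvolutions (τ : ∀ i, E i → E i) (hτ : ∀ i, Function.Involutive (τ i)) :
    AddAction (ι → Fin 2) (∀ i, E i) where
  vadd u x := fun i => if u i = 0 then x i else τ i (x i)
  zero_vadd x := by
    funext i
    exact if_pos rfl
  add_vadd u v x := by
    funext i
    change (if u i + v i = 0 then x i else τ i (x i))
      = if u i = 0 then (if v i = 0 then x i else τ i (x i))
        else τ i (if v i = 0 then x i else τ i (x i))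
    generalize u i = a
    generalize v i = b
    fin_cases a <;> fin_cases b <;> simp [hτ i (x i)]

theorem mem_orbit_coordinateInvolutions {τ : ∀ i, E i → E i} (hτ : ∀ i, Function.Involutive (τ i))
    {x y : ∀ i, E i} (h : ∀ i, y i = x i ∨ y i = τ i (x i)) :
    letI := coordinateInvolutions τ hτ
    y ∈ AddAction.orbit (ι → Fin 2) x := by
  classical
  refine ⟨fun i => if y i = x i then 0 else 1, funext fun i => ?_⟩
  change (if (if y i = x i then (0 : Fin 2) else 1) = 0 then x i else τ i (x i)) = y i
  by_cases hyx : y i = x i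
  · simp [hyx]
  · rw [if_neg hyx, if_neg one_ne_zero, (h i).resolve_left hyx]

variable [∀ i, MeasurableSpace (E i)]

theorem measurableConstVAdd_coordinateInvolutions {τ : ∀ i, E i → E i}
    (hτ : ∀ i, Function.Involutive (τ i)) (hτ_meas : ∀ i, Measurable (τ i)) :
    letI := coordinateInvolutions τ hτ
    MeasurableConstVAdd (ι → Fin 2) (∀ i, E i) := by
  let := coordinateInvolutions τ hτ
  refine ⟨fun u => measurable_pi_lambda _ fun i => ?_⟩
  change Measurable fun x : ∀ i, E i => if u i = 0 then x i else τ i (x i)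
  split_ifs
  · exact measurable_pi_apply i
  · exact (hτ_meas i).comp (measurable_pi_apply i)

theorem vaddInvariantMeasure_pi_coordinateInvolutions [Fintype ι] {τ : ∀ i, E i → E i}
    (hτ : ∀ i, Function.Involutive (τ i)) {m : ∀ i, Measure (E i)} [∀ i, SigmaFinite (m i)]
    (hτ_mp : ∀ i, MeasurePreserving (τ i) (m i) (m i)) :
    letI := coordinateInvolutions τ hτ
    VAddInvariantMeasure (ι → Fin 2) (∀ i, E i) (Measure.pi m) := by
  let := coordinateInvolutions τ hτ
  refine ⟨fun u s hs => ?_⟩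
  have hcoord (i : ι) :
      MeasurePreserving (fun x => if u i = 0 then x else τ i x) (m i) (m i) := by
    split_ifs
    · exact MeasurePreserving.id _
    · exact hτ_mp i
  exact (measurePreserving_pi m m hcoord).measure_preimage hs.nullMeasurableSet

end CoordinateInvolutions

section ConstDiv

theorem involutive_const_div {K : Type*} [CommGroupWithZero K] {b : K} (hb : b ≠ 0) :
    Function.Involutive fun x => b / x :=
  fun _ => div_div_cancel₀ hb

theorem lintegral_comp_const_div {b : ℝ} (hb : b ≠ 0) (g : ℝ → ENNReal) :
    ∫⁻ x, g x = ∫⁻ x, ENNReal.ofReal |b / x ^ 2| * g (b / x) := by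
  have hderiv : ∀ x ∈ ({0}ᶜ : Set ℝ),
      HasDerivWithinAt (fun x => b / x) (-(b / x ^ 2)) {0}ᶜ x := fun x hx => by
    simpa [div_eq_mul_inv] using ((hasDerivAt_inv hx).const_mul b).hasDerivWithinAt
  have himage : (fun x => b / x) '' {0}ᶜ = {0}ᶜ := by
    rw [Set.image_compl_eq (involutive_const_div hb).bijective]
    simp
  have hchange := lintegral_image_eq_lintegral_abs_deriv_mul (measurableSet_singleton 0).compl
    hderiv (involutive_const_div hb).injective.injOn g
  simpa only [himage, restrict_compl_singleton, abs_neg] using hchange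

theorem measurePreserving_const_div_withDensity {b : ℝ} (hb : b ≠ 0) {k : ℝ → ENNReal}
    (hk : ∀ x ≠ 0, ENNReal.ofReal |b / x ^ 2| * k (b / x) = k x) :
    MeasurePreserving (fun x => b / x) (volume.withDensity k) (volume.withDensity k) := by
  have hmeas : Measurable fun x : ℝ => b / x := by fun_prop
  refine ⟨hmeas, Measure.ext fun s hs => ?_⟩
  rw [Measure.map_apply hmeas hs, withDensity_apply _ hs, withDensity_apply _ (hmeas hs),
    ← lintegral_indicator hs, ← lintegral_indicator (hmeas hs),
    lintegral_comp_const_div hb (s.indicator k)]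
  refine lintegral_congr_ae ?_
  filter_upwards [Measure.ae_ne volume 0] with x hx
  by_cases hxs : b / x ∈ s
  · rw [Set.indicator_of_mem hxs, Set.indicator_of_mem (Set.mem_preimage.2 hxs), hk x hx]
  · rw [Set.indicator_of_notMem hxs, Set.indicator_of_notMem (mt Set.mem_preimage.1 hxs), mul_zero]

end ConstDiv

section QuadRatio

/-- The function `H(t) = (μt - c)² / (σ²t)` of one coordinate. -/
noncomputable def quadRatio (μ c σ t : ℝ) : ℝ := (μ * t - c) ^ 2 / (σ ^ 2 * t)

/-- The derivative of `quadRatio μ c σ` away from `0`. Its absolute value is the density of a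
measure invariant under `t ↦ (c / μ)² / t`. -/
noncomputable def quadRatioDeriv (μ c σ t : ℝ) : ℝ :=
  (μ ^ 2 * t ^ 2 - c ^ 2) / (σ ^ 2 * t ^ 2)

/-- For `v` attained by `quadRatio μ c σ` on `(0, ∞)`, a root of the equation
`quadRatio μ c σ t = v`, namely the smaller one if `0 < σ`. -/
noncomputable def quadRatioRoot (μ c σ v : ℝ) : ℝ :=
  c / μ + σ ^ 2 * v / (2 * μ ^ 2) - (σ * √v / (2 * μ ^ 2)) * √(4 * μ * c + σ ^ 2 * v)

@[fun_prop]
theorem measurable_quadRatio (μ c σ : ℝ) : Measurable (quadRatio μ c σ) := by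
  unfold quadRatio
  fun_prop

@[fun_prop]
theorem measurable_quadRatioDeriv (μ c σ : ℝ) : Measurable (quadRatioDeriv μ c σ) := by
  unfold quadRatioDeriv
  fun_prop

@[fun_prop]
theorem measurable_quadRatioRoot (μ c σ : ℝ) : Measurable (quadRatioRoot μ c σ) := by
  unfold quadRatioRoot
  fun_prop

variable {μ c σ : ℝ}

theorem quadRatioRoot_quadRatio (hμ : μ ≠ 0) (hσ : σ ≠ 0) {t : ℝ} (ht : 0 < t) :
    quadRatioRoot μ c σ (quadRatio μ c σ t) = t ∨
      quadRatioRoot μ c σ (quadRatio μ c σ t) = (c / μ) ^ 2 / t := by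
  set v := quadRatio μ c σ t with hv
  set s := (σ * √v / (2 * μ ^ 2)) * √(4 * μ * c + σ ^ 2 * v) with hs
  have hv_nonneg : 0 ≤ v := by
    rw [hv, quadRatio]
    positivity
  have hdiscr : 4 * μ * c + σ ^ 2 * v = (μ * t + c) ^ 2 / t := by
    rw [hv, quadRatio]
    field_simp
    ring
  have hmean : c / μ + σ ^ 2 * v / (2 * μ ^ 2) = (t + (c / μ) ^ 2 / t) / 2 := by
    rw [hv, quadRatio]
    field_simp
    ring
  have hs_sq : s ^ 2 = ((t - (c / μ) ^ 2 / t) / 2) ^ 2 := by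
    rw [hs, hdiscr, mul_pow, div_pow, mul_pow, Real.sq_sqrt hv_nonneg,
      Real.sq_sqrt (by positivity), hv, quadRatio]
    field_simp
    ring
  rw [quadRatioRoot, ← hs, hmean]
  rcases sq_eq_sq_iff_eq_or_eq_neg.1 hs_sq with h | h
  · right
    rw [h]
    ring
  · left
    rw [h]
    ring

theorem ae_quadRatioDeriv_ne_zero (hμ : μ ≠ 0) (hσ : σ ≠ 0) :
    ∀ᵐ t, quadRatioDeriv μ c σ t ≠ 0 := by
  filter_upwards [Measure.ae_ne volume 0, Measure.ae_ne volume (c / μ),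
    Measure.ae_ne volume (-(c / μ))] with t ht hpos hneg
  refine div_ne_zero (fun h => ?_) (by positivity)
  rcases sq_eq_sq_iff_eq_or_eq_neg.1 ((mul_pow μ t 2).trans (sub_eq_zero.1 h)) with h | h
  · exact hpos (eq_div_of_mul_eq hμ ((mul_comm _ _).trans h))
  · exact hneg (by rw [← neg_div]; exact eq_div_of_mul_eq hμ ((mul_comm _ _).trans h))

theorem abs_mul_abs_quadRatioDeriv_const_div (hμ : μ ≠ 0) (hc : c ≠ 0) {t : ℝ} (ht : t ≠ 0) :
    |(c / μ) ^ 2 / t ^ 2| * |quadRatioDeriv μ c σ ((c / μ) ^ 2 / t)|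
      = |quadRatioDeriv μ c σ t| := by
  have hchain : (c / μ) ^ 2 / t ^ 2 * quadRatioDeriv μ c σ ((c / μ) ^ 2 / t)
      = -quadRatioDeriv μ c σ t := by
    rcases eq_or_ne σ 0 with rfl | hσ
    · simp [quadRatioDeriv]
    · rw [quadRatioDeriv, quadRatioDeriv]
      field_simp
      ring
  rw [← abs_mul, hchain, abs_neg]

theorem measurePreserving_const_div_quadRatioDeriv (hμ : μ ≠ 0) (hc : c ≠ 0) (σ : ℝ) :
    MeasurePreserving (fun t => (c / μ) ^ 2 / t)
      (volume.withDensity fun t => ENNReal.ofReal |quadRatioDeriv μ c σ t|)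
      (volume.withDensity fun t => ENNReal.ofReal |quadRatioDeriv μ c σ t|) := by
  refine measurePreserving_const_div_withDensity (pow_ne_zero 2 (div_ne_zero hc hμ)) fun t ht => ?_
  rw [← ENNReal.ofReal_mul (abs_nonneg _), abs_mul_abs_quadRatioDeriv_const_div hμ hc ht]

end QuadRatio

section Measurability

theorem measurable_of_continuousOn_of_eq_const {α β : Type*} [TopologicalSpace α]
    [MeasurableSpace α] [OpensMeasurableSpace α] [TopologicalSpace β] [MeasurableSpace β]
    [BorelSpace β] {s : Set α} (hs : MeasurableSet s) {f : α → β} (hf : ContinuousOn f s) {b : β}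
    (hfb : ∀ x ∉ s, f x = b) : Measurable f := by
  classical
  have hpiecewise : s.piecewise f (fun _ => b) = f :=
    funext fun x => (em (x ∈ s)).elim (s.piecewise_eq_of_mem _ _)
      fun hx => (s.piecewise_eq_of_notMem _ _ hx).trans (hfb x hx).symm
  exact hpiecewise ▸ hf.measurable_piecewise continuousOn_const hs

theorem measurableSet_forall_pos {ι : Type*} [Countable ι] :
    MeasurableSet {t : ι → ℝ | ∀ i, 0 < t i} := by
  rw [Set.ofPred_forall]
  exact MeasurableSet.iInter fun i => measurableSet_lt measurable_const (measurable_pi_apply i)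

end Measurability

section MultipleRoots

variable {ι : Type*} {μ c σ : ι → ℝ}

theorem involutive_div_sq_div (hμ : ∀ i, μ i ≠ 0) (hc : ∀ i, c i ≠ 0) (i : ι) :
    Function.Involutive fun x => (c i / μ i) ^ 2 / x :=
  involutive_const_div (pow_ne_zero 2 (div_ne_zero (hc i) (hμ i)))

variable [Fintype ι] [DecidableEq ι]

theorem map_orbitSample_quadRatioRoot_eq {κ : Type*} [Fintype κ] [LinearOrder κ]
    (e : κ ≃ (ι → Fin 2)) {Ω : Type*} [MeasurableSpace Ω] {P : Measure Ω} [IsFiniteMeasure P]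
    (hμ : ∀ i, μ i ≠ 0) (hc : ∀ i, c i ≠ 0) (hσ : ∀ i, σ i ≠ 0)
    {T : Ω → ι → ℝ} (hT : AEMeasurable T P) (hTpos : ∀ᵐ ω ∂P, ∀ i, 0 < T ω i)
    {f : (ι → ℝ) → ℝ} (hf : Measurable f) (hf0 : ∀ t, 0 ≤ f t)
    (hlaw : P.map T = volume.withDensity fun t => ENNReal.ofReal (f t))
    {U : Ω → ℝ} (hU : AEMeasurable U P) (hU_law : P.map U = volume.restrict (Set.Icc 0 1))
    (hindep : IndepFun U T P) :
    letI := coordinateInvolutions _ (involutive_div_sq_div hμ hc)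
    P.map (fun ω => orbitSample e (fun t => f t * ∏ i, |quadRatioDeriv (μ i) (c i) (σ i) (t i)|⁻¹)
      (U ω) fun i => quadRatioRoot (μ i) (c i) (σ i) (quadRatio (μ i) (c i) (σ i) (T ω i)))
      = P.map T := by
  let := coordinateInvolutions _ (involutive_div_sq_div hμ hc)
  have := measurableConstVAdd_coordinateInvolutions (involutive_div_sq_div hμ hc)
    fun i => by fun_prop
  have (i : ι) : SigmaFinite
      (volume.withDensity fun t => ENNReal.ofReal |quadRatioDeriv (μ i) (c i) (σ i) t|) :=
    SigmaFinite.withDensity_ofReal _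
  have := vaddInvariantMeasure_pi_coordinateInvolutions (involutive_div_sq_div hμ hc)
    fun i => measurePreserving_const_div_quadRatioDeriv (hμ i) (hc i) (σ i)
  have hdensity := withDensity_ofReal_eq_pi_withDensity_ofReal hf
    (fun i => measurable_quadRatioDeriv (μ i) (c i) (σ i))
    fun i => ae_quadRatioDeriv_ne_zero (hμ i) (hσ i)
  have hpos : ∀ᵐ t ∂P.map T, ∀ i, 0 < t i :=
    (ae_map_iff hT measurableSet_forall_pos).2 hTpos
  have hq : Measurable fun t : ι → ℝ =>
      f t * ∏ i, |quadRatioDeriv (μ i) (c i) (σ i) (t i)|⁻¹ := by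
    simp only [← Real.norm_eq_abs]
    fun_prop
  refine map_orbitSample_eq e _ hq (fun t => ?_) hT (hlaw.trans hdensity) hU hU_law hindep ?_ ?_
    (r := fun t i => quadRatioRoot (μ i) (c i) (σ i) (quadRatio (μ i) (c i) (σ i) (t i)))
  · exact mul_nonneg (hf0 t) (Finset.prod_nonneg fun _ _ => inv_nonneg.2 (abs_nonneg _))
  · fun_prop
  · filter_upwards [hpos] with t ht
    exact mem_orbit_coordinateInvolutions _ fun i => quadRatioRoot_quadRatio (hμ i) (hσ i) (ht i)

theorem stmt10_general {Ω κ : Type*} [MeasurableSpace Ω] (P : Measure Ω) [IsFiniteMeasure P]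
    [Fintype κ] [LinearOrder κ] (μ c σ : ι → ℝ)
    (hμ : ∀ i, μ i ≠ 0) (hc : ∀ i, c i ≠ 0) (hσ : ∀ i, σ i ≠ 0)
    (T : Ω → ι → ℝ) (hT : AEMeasurable T P) (hTpos : ∀ᵐ ω ∂P, ∀ i, 0 < T ω i)
    (f : (ι → ℝ) → ℝ) (hf : Measurable f) (hf0 : ∀ t, 0 ≤ f t)
    (hlaw : P.map T = volume.withDensity fun t => ENNReal.ofReal (f t))
    (V : Ω → ι → ℝ)
    (hV : ∀ ω i, V ω i = (μ i * T ω i - c i) ^ 2 / (σ i ^ 2 * T ω i))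
    (X : Ω → ι → Fin 2 → ℝ)
    (hX1 : ∀ ω i, X ω i 0 = c i / μ i + σ i ^ 2 * V ω i / (2 * μ i ^ 2)
      - (σ i * √(V ω i) / (2 * μ i ^ 2)) * √(4 * μ i * c i + σ i ^ 2 * V ω i))
    (hX2 : ∀ ω i, X ω i 1 = c i ^ 2 / (μ i ^ 2 * X ω i 0))
    (H' : ι → ℝ → ℝ)
    (hH' : ∀ i x, H' i x = (μ i ^ 2 * x ^ 2 - c i ^ 2) / (σ i ^ 2 * x ^ 2))
    (a : (ι → Fin 2) → Ω → ℝ)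
    (ha : ∀ u ω, a u ω = f (fun i => X ω i (u i)) * ∏ i, |H' i (X ω i (u i))|⁻¹)
    (p : (ι → Fin 2) → Ω → ℝ)
    (hp : ∀ u ω, p u ω = a u ω / ∑ v : ι → Fin 2, a v ω)
    (e : κ ≃ (ι → Fin 2))
    (L : κ → Ω → ℝ) (hL : ∀ k ω, L k ω = ∑ j with j < k, p (e j) ω)
    (U : Ω → ℝ) (hU : AEMeasurable U P) (hU_law : P.map U = volume.restrict (Set.Icc 0 1))
    (hindep : IndepFun U T P)
    (Y : Ω → ι → ℝ)
    (hY : ∀ ω i, Y ω i = ∑ k,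
      if U ω ∈ Set.Ico (L k ω) (L k ω + p (e k) ω) then X ω i (e k i) else 0) :
    P.map Y = P.map T := by
  rw [← map_orbitSample_quadRatioRoot_eq e hμ hc hσ hT hTpos hf hf0 hlaw hU hU_law hindep]
  let := coordinateInvolutions _ (involutive_div_sq_div hμ hc)
  let q (t : ι → ℝ) := f t * ∏ i, |quadRatioDeriv (μ i) (c i) (σ i) (t i)|⁻¹
  let r (t : ι → ℝ) (i : ι) := quadRatioRoot (μ i) (c i) (σ i) (quadRatio (μ i) (c i) (σ i) (t i))
  have hX0 (ω : Ω) (i : ι) : X ω i 0 = r (T ω) i := by rw [hX1, hV]; rfl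
  have hX (u : ι → Fin 2) (ω : Ω) : (fun i => X ω i (u i)) = u +ᵥ r (T ω) := by
    funext i
    change X ω i (u i) = if u i = 0 then r (T ω) i else (c i / μ i) ^ 2 / r (T ω) i
    split_ifs with hu
    · rw [hu, hX0]
    · rw [Fin.eq_one_of_ne_zero _ hu, hX2, hX0, div_pow, div_div]
  have ha_eq (u : ι → Fin 2) (ω : Ω) : a u ω = q (u +ᵥ r (T ω)) := by
    simp only [ha, hH', ← hX]
    rfl
  have hp_eq (u : ι → Fin 2) (ω : Ω) : p u ω = orbitWeight q (r (T ω)) u := by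
    simp only [hp, ha_eq, orbitWeight]
  congr 1
  funext ω i
  change _ = orbitSample e q (U ω) (r (T ω)) i
  simp only [hY, orbitSample, stackedInterval, hL, hp_eq, Finset.sum_apply, ite_apply,
    Pi.zero_apply, ← hX]

end MultipleRoots

/-- Multiple-roots transformation in `N` dimensions: let `T = (T₁,…,T_N)` be a random
vector with values in `(0,∞)^N` whose law has a continuous strictly positive density `f`
on the open orthant, for each `i` set `Vᵢ = Hᵢ(Tᵢ)` with `Hᵢ(t) = (μᵢ t − cᵢ)²/(σᵢ² t)`
(where `μᵢ ≠ 0`, `cᵢ ≠ 0`, `σᵢ > 0`, `μᵢ cᵢ > 0`), let `X_{i1}, X_{i2}` be the two roots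
of `Hᵢ = Vᵢ`, and for `u ∈ {1,2}^N` set
`a_u = f(X_{1u₁},…,X_{Nu_N}) ∏ᵢ |Hᵢ′(X_{iu_i})|⁻¹` and `p_u = a_u / Σ_v a_v`.
Fix an enumeration of `{1,2}^N` with associated partition of `[0,1)` into intervals
`I_u` of lengths `p_u`.  If `U` is uniform on `[0,1]` and independent of `T`, then
`Σ_u (X_{1u₁},…,X_{Nu_N}) 1{U ∈ I_u}` has the same distribution as `T`. -/
theorem stmt10 {Ω : Type*} [MeasurableSpace Ω] (P : Measure Ω) [IsProbabilityMeasure P]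
    (N : ℕ) (hN : 1 ≤ N) (μ c σ : Fin N → ℝ)
    (hμ : ∀ i, μ i ≠ 0) (hc : ∀ i, c i ≠ 0) (hσ : ∀ i, 0 < σ i)
    (hμc : ∀ i, 0 < μ i * c i)
    (T : Ω → Fin N → ℝ) (hTm : Measurable T)
    (hTpos : ∀ᵐ ω ∂P, ∀ i, 0 < T ω i)
    (f : (Fin N → ℝ) → ℝ)
    (hfcont : ContinuousOn f {t : Fin N → ℝ | ∀ i, 0 < t i})
    (hfpos : ∀ t : Fin N → ℝ, (∀ i, 0 < t i) → 0 < f t)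
    (hfzero : ∀ t : Fin N → ℝ, ¬ (∀ i, 0 < t i) → f t = 0)
    (hlaw : Measure.map T P = volume.withDensity fun t => ENNReal.ofReal (f t))
    (V : Ω → Fin N → ℝ)
    (hV : ∀ ω i, V ω i = (μ i * T ω i - c i) ^ 2 / ((σ i) ^ 2 * T ω i))
    (X : Ω → Fin N → Fin 2 → ℝ)
    (hX1 : ∀ ω i, X ω i 0 = c i / μ i + (σ i) ^ 2 * V ω i / (2 * (μ i) ^ 2)
      - (σ i * Real.sqrt (V ω i) / (2 * (μ i) ^ 2))
        * Real.sqrt (4 * μ i * c i + (σ i) ^ 2 * V ω i))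
    (hX2 : ∀ ω i, X ω i 1 = (c i) ^ 2 / ((μ i) ^ 2 * X ω i 0))
    (H' : Fin N → ℝ → ℝ)
    (hH' : ∀ i x, H' i x = ((μ i) ^ 2 * x ^ 2 - (c i) ^ 2) / ((σ i) ^ 2 * x ^ 2))
    (a : (Fin N → Fin 2) → Ω → ℝ)
    (ha : ∀ u ω, a u ω = f (fun i => X ω i (u i)) * ∏ i, |H' i (X ω i (u i))|⁻¹)
    (p : (Fin N → Fin 2) → Ω → ℝ)
    (hp : ∀ u ω, p u ω = a u ω / ∑ v : Fin N → Fin 2, a v ω)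
    (e : Fin (2 ^ N) ≃ (Fin N → Fin 2))
    (L : Fin (2 ^ N) → Ω → ℝ)
    (hL : ∀ k ω, L k ω = ∑ j ∈ Finset.univ.filter (fun j : Fin (2 ^ N) => j < k), p (e j) ω)
    (U : Ω → ℝ) (hUm : Measurable U)
    (hU : Measure.map U P = volume.restrict (Set.Icc (0 : ℝ) 1))
    (hindep : IndepFun U T P)
    (Y : Ω → Fin N → ℝ)
    (hY : ∀ ω i, Y ω i = ∑ k : Fin (2 ^ N),
      (if U ω ∈ Set.Ico (L k ω) (L k ω + p (e k) ω) then X ω i (e k i) else 0)) :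
    Measure.map Y P = Measure.map T P := by
  have hf : Measurable f :=
    measurable_of_continuousOn_of_eq_const measurableSet_forall_pos hfcont hfzero
  have hf0 (t : Fin N → ℝ) : 0 ≤ f t :=
    (em (∀ i, 0 < t i)).elim (fun ht => (hfpos t ht).le) fun ht => (hfzero t ht).ge
  exact stmt10_general P μ c σ hμ hc (fun i => (hσ i).ne') T hTm.aemeasurable hTpos f hf hf0 hlaw
    V hV X hX1 hX2 H' hH' a ha p hp e L hL U hUm.aemeasurable hU hindep Y hY
end

section
/- Let μ ≠ 0, c ≠ 0, σ > 0 with μc > 0, and set H(t) = (μt − c)² / (σ²t). Let T be a random variable with values in (0,∞) whose law has a continuous, strictly positive density f on (0,∞). Set V = H(T), X₁ = c/μ + σ²V/(2μ²) − (σ√V/(2μ²))·√(4μc + σ²V), X₂ = c²/(μ²X₁), and p₁ = (1 + |H′(X₁)/H′(X₂)| · f(X₂)/f(X₁))⁻¹ (almost surely well defined). Let U be uniform on [0,1] and independent of T. Then the random variable X₁·1{U ≤ p₁} + X₂·1{U > p₁} has the same distribution as T. -/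
open MeasureTheory ProbabilityTheory Real

/-!
The two roots of `H = v` are exchanged by the involution `t ↦ b / t` with `b = (c / μ) ^ 2`, so `X₁`
is either `T` or `b / T`, and `p₁` is the conditional probability, given that `T` is one of `X₁` and
`X₂`, that it is `X₁`. Whichever root `X₁` is, the transformation keeps `T` with probability `q(T)`
and replaces it by `b / T` with probability `1 - q(T)`, where
`q(t) = f(t) / (f(t) + (b / t²) f(b / t))`. The moved mass has density `f (1 - q)` and is invariant
under `t ↦ b / t`, so moving it does not change the law of `T`.
-/

section Resampling

open scoped ENNReal

lemma lintegral_uniform_ite_le {α : Type*} {p : ℝ} (hp : p ∈ Set.Icc (0 : ℝ) 1) (x y : α)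
    (G : α → ℝ≥0∞) :
    ∫⁻ u in Set.Icc (0 : ℝ) 1, G (if u ≤ p then x else y)
      = ENNReal.ofReal p * G x + ENNReal.ofReal (1 - p) * G y := by
  have hle : Set.Iic p ∩ Set.Icc 0 1 = Set.Icc 0 p := by
    ext u
    simp only [Set.mem_inter_iff, Set.mem_Iic, Set.mem_Icc]
    grind
  have hgt : (Set.Iic p)ᶜ ∩ Set.Icc 0 1 = Set.Ioc p 1 := by
    ext u
    simp only [Set.mem_inter_iff, Set.mem_compl_iff, Set.mem_Iic, Set.mem_Icc, Set.mem_Ioc]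
    grind
  calc ∫⁻ u in Set.Icc (0 : ℝ) 1, G (if u ≤ p then x else y)
      = ∫⁻ u in Set.Icc (0 : ℝ) 1, (Set.Iic p).piecewise (fun _ ↦ G x) (fun _ ↦ G y) u := by
        simp only [Set.piecewise, Set.mem_Iic, apply_ite G]
    _ = ENNReal.ofReal p * G x + ENNReal.ofReal (1 - p) * G y := by
        rw [lintegral_piecewise measurableSet_Iic,
          Measure.restrict_restrict measurableSet_Iic,
          Measure.restrict_restrict measurableSet_Iic.compl, hle, hgt]
        simp [mul_comm]

variable {Ω α : Type*} [MeasurableSpace Ω] [MeasurableSpace α] {P : Measure Ω}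

lemma lintegral_ite_le_of_indepFun {β : Type*} [MeasurableSpace β] [IsFiniteMeasure P]
    {T : Ω → α} (hT : AEMeasurable T P) {U : Ω → ℝ} (hUm : AEMeasurable U P)
    (hU : P.map U = volume.restrict (Set.Icc 0 1)) (hindep : IndepFun U T P)
    {p : α → ℝ} (hp : Measurable p) (hp01 : ∀ᵐ t ∂P.map T, p t ∈ Set.Icc (0 : ℝ) 1)
    {x y : α → β} (hx : Measurable x) (hy : Measurable y) {G : β → ℝ≥0∞} (hG : Measurable G) :
    ∫⁻ ω, G (if U ω ≤ p (T ω) then x (T ω) else y (T ω)) ∂P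
      = ∫⁻ t, (ENNReal.ofReal (p t) * G (x t) + ENNReal.ofReal (1 - p t) * G (y t)) ∂P.map T := by
  let Φ : α × ℝ → ℝ≥0∞ := fun z ↦ G (if z.2 ≤ p z.1 then x z.1 else y z.1)
  have hΦ : Measurable Φ :=
    hG.comp (.ite (measurableSet_le (by fun_prop) (by fun_prop)) (by fun_prop) (by fun_prop))
  calc ∫⁻ ω, Φ (T ω, U ω) ∂P
      = ∫⁻ z, Φ z ∂(P.map T).prod (P.map U) := by
        rw [← hindep.symm.map_prod_eq_prod_map_map hT hUm,
          lintegral_map' hΦ.aemeasurable (hT.prodMk hUm)]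
    _ = ∫⁻ t, ∫⁻ u in Set.Icc 0 1, Φ (t, u) ∂volume ∂P.map T := by
        rw [lintegral_prod _ hΦ.aemeasurable, hU]
    _ = _ := lintegral_congr_ae (hp01.mono fun t ht ↦ lintegral_uniform_ite_le ht (x t) (y t) G)

lemma lintegral_mixture_eq_of_measurePreserving {ν : Measure α} {φ : α → α} {q : α → ℝ}
    (hq : Measurable q) (hq01 : ∀ᵐ t ∂ν, q t ∈ Set.Icc (0 : ℝ) 1)
    (hφ : MeasurePreserving φ (ν.withDensity fun t ↦ ENNReal.ofReal (1 - q t))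
      (ν.withDensity fun t ↦ ENNReal.ofReal (1 - q t)))
    {G : α → ℝ≥0∞} (hG : Measurable G) :
    ∫⁻ t, (ENNReal.ofReal (q t) * G t + ENNReal.ofReal (1 - q t) * G (φ t)) ∂ν
      = ∫⁻ t, G t ∂ν := by
  have hmoved : ∫⁻ t, ENNReal.ofReal (1 - q t) * G (φ t) ∂ν
      = ∫⁻ t, ENNReal.ofReal (1 - q t) * G t ∂ν := by
    have hGφ : Measurable fun t ↦ G (φ t) := hG.comp hφ.measurable
    have h := hφ.lintegral_comp hG
    rwa [lintegral_withDensity_eq_lintegral_mul _ (by fun_prop) hGφ,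
      lintegral_withDensity_eq_lintegral_mul _ (by fun_prop) hG] at h
  rw [lintegral_add_left (by fun_prop), hmoved, ← lintegral_add_left (by fun_prop)]
  refine lintegral_congr_ae (hq01.mono fun t ht ↦ ?_)
  simp only [← add_mul]
  rw [← ENNReal.ofReal_add ht.1 (sub_nonneg.2 ht.2), add_sub_cancel, ENNReal.ofReal_one, one_mul]

theorem map_resample_eq_of_involutive [IsFiniteMeasure P]
    {T : Ω → α} (hT : AEMeasurable T P) {U : Ω → ℝ} (hUm : AEMeasurable U P)
    (hU : P.map U = volume.restrict (Set.Icc 0 1)) (hindep : IndepFun U T P)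
    {φ : α → α} (hφφ : ∀ᵐ t ∂P.map T, φ (φ t) = t)
    {q : α → ℝ} (hq : Measurable q) (hq01 : ∀ᵐ t ∂P.map T, q t ∈ Set.Icc (0 : ℝ) 1)
    (hqφ : ∀ᵐ t ∂P.map T, q (φ t) = 1 - q t)
    (hφ : MeasurePreserving φ ((P.map T).withDensity fun t ↦ ENNReal.ofReal (1 - q t))
      ((P.map T).withDensity fun t ↦ ENNReal.ofReal (1 - q t)))
    {x : α → α} (hx : Measurable x) (hxT : ∀ᵐ t ∂P.map T, x t = t ∨ x t = φ t) :
    P.map (fun ω ↦ if U ω ≤ q (x (T ω)) then x (T ω) else φ (x (T ω))) = P.map T := by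
  have hqx01 : ∀ᵐ t ∂P.map T, q (x t) ∈ Set.Icc (0 : ℝ) 1 := by
    filter_upwards [hq01, hqφ, hxT] with t ht hqt hxt
    rcases hxt with h | h
    · rwa [h]
    · rw [h, hqt]
      exact ⟨sub_nonneg.2 ht.2, sub_le_self _ ht.1⟩
  have hY : AEMeasurable (fun ω ↦ if U ω ≤ q (x (T ω)) then x (T ω) else φ (x (T ω))) P := by
    have hΦ : Measurable fun z : α × ℝ ↦ if z.2 ≤ q (x z.1) then x z.1 else φ (x z.1) :=
      .ite (measurableSet_le (by fun_prop) (by fun_prop)) (by fun_prop)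
        (hφ.measurable.comp (by fun_prop))
    exact hΦ.comp_aemeasurable (hT.prodMk hUm)
  refine Measure.ext_of_lintegral _ fun G hG ↦ ?_
  calc ∫⁻ s, G s ∂P.map (fun ω ↦ if U ω ≤ q (x (T ω)) then x (T ω) else φ (x (T ω)))
      = ∫⁻ t, (ENNReal.ofReal (q (x t)) * G (x t)
          + ENNReal.ofReal (1 - q (x t)) * G (φ (x t))) ∂P.map T := by
        rw [lintegral_map' hG.aemeasurable hY]
        exact lintegral_ite_le_of_indepFun hT hUm hU hindep (hq.comp hx) hqx01 hx
          (hφ.measurable.comp hx) hG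
    _ = ∫⁻ t, (ENNReal.ofReal (q t) * G t + ENNReal.ofReal (1 - q t) * G (φ t)) ∂P.map T := by
        refine lintegral_congr_ae ?_
        filter_upwards [hφφ, hqφ, hxT] with t hφt hqt hxt
        rcases hxt with h | h
        · rw [h]
        · rw [h, hφt, hqt, sub_sub_cancel, add_comm]
    _ = ∫⁻ t, G t ∂P.map T := lintegral_mixture_eq_of_measurePreserving hq hq01 hφ hG

lemma ae_of_map_eq_withDensity {T : Ω → α} (hT : AEMeasurable T P) {ν : Measure α}
    {g : α → ℝ≥0∞} (hlaw : P.map T = ν.withDensity g) {Q : α → Prop} (hQ : ∀ᵐ t ∂ν, Q t) :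
    ∀ᵐ ω ∂P, Q (T ω) := by
  refine ae_of_ae_map hT ?_
  rw [hlaw]
  exact (withDensity_absolutelyContinuous ν g).ae_le hQ

end Resampling

section Support

variable {α : Type*} [MeasurableSpace α] {s : Set α}

lemma measurable_of_continuousOn_of_support_subset {β : Type*} [TopologicalSpace α]
    [OpensMeasurableSpace α] [TopologicalSpace β] [MeasurableSpace β] [BorelSpace β] [Zero β]
    {f : α → β} (hf : ContinuousOn f s) (hs : MeasurableSet s) (hsupp : f.support ⊆ s) :
    Measurable f := by
  classical
  rw [← Set.indicator_eq_self.2 hsupp, ← Set.piecewise_eq_indicator]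
  exact hf.measurable_piecewise continuousOn_const hs

lemma withDensity_ofReal_eq_restrict {f : α → ℝ} (ν : Measure α) (hs : MeasurableSet s)
    (hsupp : f.support ⊆ s) :
    ν.withDensity (fun t ↦ ENNReal.ofReal (f t))
      = (ν.restrict s).withDensity fun t ↦ ENNReal.ofReal (f t) := by
  rw [← withDensity_indicator hs, Set.indicator_eq_self.2]
  exact (Function.support_comp_subset ENNReal.ofReal_zero f).trans hsupp

end Support

section Inversion

open scoped ENNReal

variable {b t : ℝ}

lemma sq_ne_of_eq_or_eq_div {x : ℝ} (hx : 0 < x) (ht : 0 < t) (htb : t ≠ √b)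
    (hxt : x = t ∨ x = b / t) : x ^ 2 ≠ b := by
  intro hxb
  suffices h : x = t from htb (by rw [← hxb, sqrt_sq hx.le, h])
  rcases hxt with h | h
  · exact h
  · rw [← hxb] at h
    field_simp at h
    exact h.symm

lemma lintegral_Ioi_const_div (hb : 0 < b) (G : ℝ → ℝ≥0∞) :
    ∫⁻ t in Set.Ioi (0 : ℝ), ENNReal.ofReal (b / t ^ 2) * G (b / t)
      = ∫⁻ t in Set.Ioi (0 : ℝ), G t := by
  have himage : (fun t ↦ b / t) '' Set.Ioi (0 : ℝ) = Set.Ioi 0 :=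
    Set.Subset.antisymm (Set.image_subset_iff.2 fun t ht ↦ div_pos hb ht)
      fun t ht ↦ ⟨b / t, div_pos hb ht, div_div_cancel₀ hb.ne'⟩
  have hinj : Set.InjOn (fun t ↦ b / t) (Set.Ioi (0 : ℝ)) := fun s _ t _ h ↦ by
    simpa only [div_div_cancel₀ hb.ne'] using congrArg (b / ·) h
  have hderiv : ∀ t ∈ Set.Ioi (0 : ℝ),
      HasDerivWithinAt (fun t ↦ b / t) (-(b / t ^ 2)) (Set.Ioi 0) t := fun t ht ↦ by
    simpa [div_eq_mul_inv] using
      ((hasDerivAt_inv (ne_of_gt ht)).const_mul b).hasDerivWithinAt (s := Set.Ioi 0)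
  have h := lintegral_image_eq_lintegral_abs_deriv_mul measurableSet_Ioi hderiv hinj G
  rw [himage] at h
  rw [h]
  refine setLIntegral_congr_fun measurableSet_Ioi fun t _ ↦ ?_
  simp only [abs_neg, abs_of_nonneg (div_nonneg hb.le (sq_nonneg t))]

lemma measurePreserving_const_div_withDensity_s11 (hb : 0 < b) {h : ℝ → ℝ} (hm : Measurable h)
    (hh : ∀ t, 0 < t → b / t ^ 2 * h (b / t) = h t) :
    MeasurePreserving (fun t ↦ b / t)
      ((volume.restrict (Set.Ioi 0)).withDensity fun t ↦ ENNReal.ofReal (h t))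
      ((volume.restrict (Set.Ioi 0)).withDensity fun t ↦ ENNReal.ofReal (h t)) := by
  have hinv : Measurable fun t : ℝ ↦ b / t := by fun_prop
  refine ⟨hinv, Measure.ext_of_lintegral _ fun G hG ↦ ?_⟩
  have hGb : Measurable fun t ↦ G (b / t) := hG.comp hinv
  rw [lintegral_map hG hinv,
    lintegral_withDensity_eq_lintegral_mul _ (by fun_prop) hGb,
    lintegral_withDensity_eq_lintegral_mul _ (by fun_prop) hG,
    ← lintegral_Ioi_const_div hb ((fun t ↦ ENNReal.ofReal (h t)) * G)]
  refine setLIntegral_congr_fun measurableSet_Ioi fun t ht ↦ ?_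
  simp only [Pi.mul_apply]
  rw [← mul_assoc, ← ENNReal.ofReal_mul (div_nonneg hb.le (sq_nonneg t)), hh t ht]

/-- The conditional probability that a random variable with density `f` on `(0, ∞)` equals `t`,
given that it is one of `t` and `b / t`. The weight of `b / t` is the density at `t` of the image of
`f` under the inversion `s ↦ b / s`. -/
noncomputable def rootProb (f : ℝ → ℝ) (b t : ℝ) : ℝ :=
  f t / (f t + b / t ^ 2 * f (b / t))

variable {f : ℝ → ℝ}

lemma measurable_rootProb (hf : Measurable f) : Measurable (rootProb f b) := by
  unfold rootProb
  fun_prop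

lemma rootProb_mem_Icc (hb : 0 < b) (hpos : ∀ s, 0 < s → 0 < f s) (ht : 0 < t) :
    rootProb f b t ∈ Set.Icc (0 : ℝ) 1 := by
  have hft := hpos t ht
  have hfb := hpos (b / t) (by positivity)
  refine ⟨by unfold rootProb; positivity, div_le_one_of_le₀ ?_ (by positivity)⟩
  exact le_add_of_nonneg_right (by positivity)

lemma rootProb_const_div (hb : 0 < b) (hpos : ∀ s, 0 < s → 0 < f s) (ht : 0 < t) :
    rootProb f b (b / t) = 1 - rootProb f b t := by
  have hft := hpos t ht
  have hfb := hpos (b / t) (by positivity)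
  unfold rootProb
  rw [div_div_cancel₀ hb.ne']
  generalize f (b / t) = y at hfb ⊢
  field_simp
  ring

lemma mul_one_sub_rootProb_const_div (hb : 0 < b) (hpos : ∀ s, 0 < s → 0 < f s) (ht : 0 < t) :
    b / t ^ 2 * (f (b / t) * (1 - rootProb f b (b / t))) = f t * (1 - rootProb f b t) := by
  have hft := hpos t ht
  have hfb := hpos (b / t) (by positivity)
  rw [rootProb_const_div hb hpos ht, sub_sub_cancel]
  unfold rootProb
  generalize f (b / t) = y at hfb ⊢
  field_simp
  ring

lemma inv_one_add_eq_rootProb (ht : f t ≠ 0) :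
    (1 + b / t ^ 2 * (f (b / t) / f t))⁻¹ = rootProb f b t := by
  rw [rootProb, ← mul_div_assoc, one_add_div ht, inv_div]

theorem measurePreserving_const_div_one_sub_rootProb (hb : 0 < b) (hf : Measurable f)
    (hpos : ∀ s, 0 < s → 0 < f s) {ν : Measure ℝ}
    (hν : ν = (volume.restrict (Set.Ioi 0)).withDensity fun t ↦ ENNReal.ofReal (f t)) :
    MeasurePreserving (fun t ↦ b / t) (ν.withDensity fun t ↦ ENNReal.ofReal (1 - rootProb f b t))
      (ν.withDensity fun t ↦ ENNReal.ofReal (1 - rootProb f b t)) := by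
  have hq := measurable_rootProb (b := b) hf
  have hmul : ν.withDensity (fun t ↦ ENNReal.ofReal (1 - rootProb f b t))
      = (volume.restrict (Set.Ioi 0)).withDensity
          fun t ↦ ENNReal.ofReal (f t * (1 - rootProb f b t)) := by
    rw [hν, ← withDensity_mul _ (by fun_prop) (by fun_prop)]
    refine withDensity_congr_ae ?_
    filter_upwards [ae_restrict_mem measurableSet_Ioi] with t ht
    exact (ENNReal.ofReal_mul (hpos t ht).le).symm
  rw [hmul]
  exact measurePreserving_const_div_withDensity_s11 hb (by fun_prop)
    fun t ht ↦ mul_one_sub_rootProb_const_div hb hpos ht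

theorem map_resample_const_div_eq {Ω : Type*} [MeasurableSpace Ω] {P : Measure Ω}
    [IsFiniteMeasure P] (hb : 0 < b) (hf : Measurable f) (hpos : ∀ s, 0 < s → 0 < f s)
    {T : Ω → ℝ} (hT : AEMeasurable T P)
    (hlaw : P.map T = (volume.restrict (Set.Ioi 0)).withDensity fun t ↦ ENNReal.ofReal (f t))
    {U : Ω → ℝ} (hUm : AEMeasurable U P)
    (hU : P.map U = volume.restrict (Set.Icc 0 1)) (hindep : IndepFun U T P)
    {x : ℝ → ℝ} (hx : Measurable x) (hxT : ∀ t, 0 < t → x t = t ∨ x t = b / t) :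
    P.map (fun ω ↦ if U ω ≤ rootProb f b (x (T ω)) then x (T ω) else b / x (T ω)) = P.map T := by
  have hTpos : ∀ᵐ t ∂P.map T, 0 < t := by
    rw [hlaw]
    exact (withDensity_absolutelyContinuous _ _).ae_le (ae_restrict_mem measurableSet_Ioi)
  exact map_resample_eq_of_involutive hT hUm hU hindep
    (.of_forall fun t ↦ div_div_cancel₀ hb.ne') (measurable_rootProb hf)
    (hTpos.mono fun t ht ↦ rootProb_mem_Icc hb hpos ht)
    (hTpos.mono fun t ht ↦ rootProb_const_div hb hpos ht)
    (measurePreserving_const_div_one_sub_rootProb hb hf hpos hlaw) hx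
    (hTpos.mono hxT)

end Inversion

section Roots

variable {μ c σ t : ℝ}

/-- The root `X₁` of the equation `(μ t - c) ^ 2 / (σ ^ 2 * t) = v` as a function of `v`. It is the
smaller root when `0 < σ` and the larger one when `σ < 0`. -/
noncomputable def levelRoot (μ c σ v : ℝ) : ℝ :=
  c / μ + σ ^ 2 * v / (2 * μ ^ 2) - (σ * √v / (2 * μ ^ 2)) * √(4 * μ * c + σ ^ 2 * v)

lemma measurable_levelRoot (μ c σ : ℝ) : Measurable (levelRoot μ c σ) := by
  unfold levelRoot
  fun_prop

lemma sq_mul_sqrt_mul_sqrt_level (hσ : σ ≠ 0) (ht : 0 < t) {v : ℝ}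
    (hv : v = (μ * t - c) ^ 2 / (σ ^ 2 * t)) :
    (σ * √v * √(4 * μ * c + σ ^ 2 * v)) ^ 2 = ((μ ^ 2 * t ^ 2 - c ^ 2) / t) ^ 2 := by
  have hdiscrim : 4 * μ * c + σ ^ 2 * v = (μ * t + c) ^ 2 / t := by
    rw [hv]
    field_simp
    ring
  rw [hdiscrim, mul_pow, mul_pow, sq_sqrt (hv ▸ by positivity), sq_sqrt (by positivity), hv]
  field_simp
  ring

lemma levelRoot_eq_or (hμ : μ ≠ 0) (hσ : σ ≠ 0) (ht : 0 < t) :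
    levelRoot μ c σ ((μ * t - c) ^ 2 / (σ ^ 2 * t)) = t ∨
      levelRoot μ c σ ((μ * t - c) ^ 2 / (σ ^ 2 * t)) = (c / μ) ^ 2 / t := by
  unfold levelRoot
  generalize hv : (μ * t - c) ^ 2 / (σ ^ 2 * t) = v
  have hmid : c / μ + σ ^ 2 * v / (2 * μ ^ 2) = (μ ^ 2 * t ^ 2 + c ^ 2) / (2 * μ ^ 2 * t) := by
    rw [← hv]
    field_simp
    ring
  rw [div_mul_eq_mul_div, hmid]
  rcases sq_eq_sq_iff_eq_or_eq_neg.1 (sq_mul_sqrt_mul_sqrt_level hσ ht hv.symm) with h | h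
  · right
    rw [h]
    field_simp
    ring
  · left
    rw [h]
    field_simp
    ring

lemma abs_levelDeriv_div_levelDeriv (hμ : μ ≠ 0) (hc : c ≠ 0) (hσ : σ ≠ 0) {x : ℝ} (hx : x ≠ 0)
    (hxc : x ^ 2 ≠ (c / μ) ^ 2) :
    |(μ ^ 2 * x ^ 2 - c ^ 2) / (σ ^ 2 * x ^ 2) /
        ((μ ^ 2 * ((c / μ) ^ 2 / x) ^ 2 - c ^ 2) / (σ ^ 2 * ((c / μ) ^ 2 / x) ^ 2))|
      = (c / μ) ^ 2 / x ^ 2 := by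
  have hne : μ ^ 2 * x ^ 2 - c ^ 2 ≠ 0 := fun h ↦ hxc (by field_simp; linarith)
  have himage : μ ^ 2 * ((c / μ) ^ 2 / x) ^ 2 - c ^ 2
      = -((c / μ) ^ 2 / x ^ 2 * (μ ^ 2 * x ^ 2 - c ^ 2)) := by
    field_simp
    ring
  have hratio : (μ ^ 2 * x ^ 2 - c ^ 2) / (σ ^ 2 * x ^ 2) /
      ((μ ^ 2 * ((c / μ) ^ 2 / x) ^ 2 - c ^ 2) / (σ ^ 2 * ((c / μ) ^ 2 / x) ^ 2))
      = -((c / μ) ^ 2 / x ^ 2) := by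
    rw [himage]
    field_simp
  rw [hratio, abs_neg, abs_of_nonneg (by positivity)]

end Roots

theorem stmt11_general {Ω : Type*} [MeasurableSpace Ω] (P : Measure Ω) [IsFiniteMeasure P]
    (μ c σ : ℝ) (hμ : μ ≠ 0) (hc : c ≠ 0) (hσ : σ ≠ 0)
    (T : Ω → ℝ) (hT : AEMeasurable T P)
    (f : ℝ → ℝ) (hf : Measurable f) (hfpos : ∀ t : ℝ, 0 < t → 0 < f t)
    (hlaw : P.map T = (volume.restrict (Set.Ioi 0)).withDensity fun t ↦ ENNReal.ofReal (f t))
    (V X₁ X₂ p₁ : Ω → ℝ)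
    (hV : ∀ ω, V ω = (μ * T ω - c) ^ 2 / (σ ^ 2 * T ω))
    (hX₁ : ∀ ω, X₁ ω = c / μ + σ ^ 2 * V ω / (2 * μ ^ 2)
      - (σ * √(V ω) / (2 * μ ^ 2)) * √(4 * μ * c + σ ^ 2 * V ω))
    (hX₂ : ∀ ω, X₂ ω = c ^ 2 / (μ ^ 2 * X₁ ω))
    (H' : ℝ → ℝ) (hH' : ∀ x, H' x = (μ ^ 2 * x ^ 2 - c ^ 2) / (σ ^ 2 * x ^ 2))
    (hp₁ : ∀ ω, p₁ ω = (1 + |H' (X₁ ω) / H' (X₂ ω)| * (f (X₂ ω) / f (X₁ ω)))⁻¹)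
    (U : Ω → ℝ) (hUm : AEMeasurable U P)
    (hU : P.map U = volume.restrict (Set.Icc 0 1)) (hindep : IndepFun U T P) :
    P.map (fun ω ↦ if U ω ≤ p₁ ω then X₁ ω else X₂ ω) = P.map T := by
  have hb : 0 < (c / μ) ^ 2 := by positivity
  let x : ℝ → ℝ := fun t ↦ levelRoot μ c σ ((μ * t - c) ^ 2 / (σ ^ 2 * t))
  have hxm : Measurable x := (measurable_levelRoot μ c σ).comp (by fun_prop)
  have hxT : ∀ t, 0 < t → x t = t ∨ x t = (c / μ) ^ 2 / t := fun t ↦ levelRoot_eq_or hμ hσ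
  have hX₁x : ∀ ω, X₁ ω = x (T ω) := fun ω ↦ by rw [hX₁, hV]; rfl
  have hX₂x : ∀ ω, X₂ ω = (c / μ) ^ 2 / x (T ω) := fun ω ↦ by
    rw [hX₂, hX₁x, div_pow, div_div]
  -- At `T = |c / μ|` the roots coincide and `H'` vanishes, so `p₁` takes the junk
  -- value `(1 + |0 / 0| * 1)⁻¹ = 1`.
  have hT_ae : ∀ᵐ ω ∂P, 0 < T ω ∧ T ω ≠ √((c / μ) ^ 2) :=
    ae_of_map_eq_withDensity hT hlaw
      ((ae_restrict_mem measurableSet_Ioi).and (Measure.ae_ne _ _))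
  have hp₁q : ∀ᵐ ω ∂P, p₁ ω = rootProb f ((c / μ) ^ 2) (x (T ω)) := by
    filter_upwards [hT_ae] with ω ⟨hpos, hne⟩
    have hxpos : 0 < x (T ω) := by
      rcases hxT _ hpos with h | h <;> rw [h]
      · exact hpos
      · positivity
    rw [hp₁, hX₁x, hX₂x, hH', hH', abs_levelDeriv_div_levelDeriv hμ hc hσ hxpos.ne'
      (sq_ne_of_eq_or_eq_div hxpos hpos hne (hxT _ hpos)),
      inv_one_add_eq_rootProb (hfpos _ hxpos).ne']
  rw [← map_resample_const_div_eq hb hf hfpos hT hlaw hUm hU hindep hxm hxT]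
  refine Measure.map_congr (hp₁q.mono fun ω hω ↦ ?_)
  simp only [hω, hX₁x, hX₂x]

/-- Multiple-roots transformation in one dimension: for `μ ≠ 0`, `c ≠ 0`, `σ > 0` with
`μ c > 0`, let `T` be a positive random variable whose law has a continuous strictly
positive density `f` on `(0, ∞)`, set `V = H(T)` with `H(t) = (μ t − c)² / (σ² t)`, let
`X₁, X₂` be the two roots of `H = V` and `p₁ = (1 + |H′(X₁)/H′(X₂)| f(X₂)/f(X₁))⁻¹`.
If `U` is uniform on `[0,1]` and independent of `T`, then
`X₁ 1{U ≤ p₁} + X₂ 1{U > p₁}` has the same distribution as `T`. -/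
theorem stmt11 {Ω : Type*} [MeasurableSpace Ω] (P : Measure Ω) [IsProbabilityMeasure P]
    (μ c σ : ℝ) (hμ : μ ≠ 0) (hc : c ≠ 0) (hσ : 0 < σ) (hμc : 0 < μ * c)
    (T : Ω → ℝ) (hTm : Measurable T) (hTpos : ∀ᵐ ω ∂P, 0 < T ω)
    (f : ℝ → ℝ) (hfcont : ContinuousOn f (Set.Ioi 0))
    (hfpos : ∀ t : ℝ, 0 < t → 0 < f t) (hfzero : ∀ t : ℝ, t ≤ 0 → f t = 0)
    (hlaw : Measure.map T P = volume.withDensity fun t => ENNReal.ofReal (f t))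
    (V X₁ X₂ p₁ : Ω → ℝ)
    (hV : ∀ ω, V ω = (μ * T ω - c) ^ 2 / (σ ^ 2 * T ω))
    (hX₁ : ∀ ω, X₁ ω = c / μ + σ ^ 2 * V ω / (2 * μ ^ 2)
      - (σ * Real.sqrt (V ω) / (2 * μ ^ 2)) * Real.sqrt (4 * μ * c + σ ^ 2 * V ω))
    (hX₂ : ∀ ω, X₂ ω = c ^ 2 / (μ ^ 2 * X₁ ω))
    (H' : ℝ → ℝ) (hH' : ∀ x, H' x = (μ ^ 2 * x ^ 2 - c ^ 2) / (σ ^ 2 * x ^ 2))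
    (hp₁ : ∀ ω, p₁ ω = (1 + |H' (X₁ ω) / H' (X₂ ω)| * (f (X₂ ω) / f (X₁ ω)))⁻¹)
    (U : Ω → ℝ) (hUm : Measurable U)
    (hU : Measure.map U P = volume.restrict (Set.Icc (0 : ℝ) 1))
    (hindep : IndepFun U T P) :
    Measure.map (fun ω => if U ω ≤ p₁ ω then X₁ ω else X₂ ω) P = Measure.map T P := by
  have hsupp : f.support ⊆ Set.Ioi 0 := fun t ht ↦ not_le.1 fun h ↦ ht (hfzero t h)
  exact stmt11_general P μ c σ hμ hc hσ.ne' T hTm.aemeasurable f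
    (measurable_of_continuousOn_of_support_subset hfcont measurableSet_Ioi hsupp) hfpos
    (hlaw.trans (withDensity_ofReal_eq_restrict volume measurableSet_Ioi hsupp))
    V X₁ X₂ p₁ hV hX₁ hX₂ H' hH' hp₁ U hUm.aemeasurable hU hindep
end

section
/- Let Z and W be independent standard normal random variables, let ρ ∈ [−1,1], and set Z₂ = ρZ + √(1−ρ²)·W (so that (Z, Z₂) is a bivariate standard Gaussian vector with correlation ρ). Let Φ denote the cumulative distribution function of the standard normal distribution. Then Cov(Φ(Z), Φ(Z₂)) = (1/(2π))·arcsin(ρ/2); equivalently, since Var(Φ(Z)) = Var(Φ(Z₂)) = 1/12, the correlation ρ_U of the uniform variables Φ(Z) and Φ(Z₂) satisfies ρ = 2·sin((π/6)·ρ_U). -/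
open MeasureTheory ProbabilityTheory Real

/-- The cumulative distribution function of the standard normal distribution. -/
noncomputable def stdNormalCDF (x : ℝ) : ℝ := ((gaussianReal 0 1) (Set.Iic x)).toReal

/-! For independent standard normals `A` and `B` one has `Φ x * Φ y = P(x + A > 0, y + B > 0)`, so
the mean of `Φ(X) * Φ(Y)` is the probability that both coordinates of `(X + A, Y + B)` are positive.
Adding `(A, B)` increases each variance by `1` and leaves the covariance unchanged, which turns the
correlation `ρ` of a standard pair into `ρ / 2`. Sheppard's formula then gives the orthant
probability: a centred Gaussian pair is a linear image of the rotation-invariant Gaussian measure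
on the plane, under which a cone has mass its angle divided by `2π`. -/

section

open Set
open scoped Measure

lemma stdNormalCDF_eq_measureReal_Ioi_neg (x : ℝ) :
    stdNormalCDF x = (gaussianReal 0 1).real (Ioi (-x)) := by
  have hsymm : (gaussianReal 0 1).map (fun y ↦ -y) = gaussianReal 0 1 := by
    rw [gaussianReal_map_neg, neg_zero]
  have := nullSingletonClass_gaussianReal (μ := 0) one_ne_zero
  calc stdNormalCDF x = ((gaussianReal 0 1).map (fun y ↦ -y)).real (Iic x) := by
        rw [hsymm]
        rfl
    _ = (gaussianReal 0 1).real (Ici (-x)) := by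
      rw [map_measureReal_apply measurable_neg measurableSet_Iic]
      simp
    _ = (gaussianReal 0 1).real (Ioi (-x)) := measureReal_congr Ioi_ae_eq_Ici.symm

lemma stdNormalCDF_neg (x : ℝ) : stdNormalCDF (-x) = 1 - stdNormalCDF x := by
  rw [stdNormalCDF_eq_measureReal_Ioi_neg, neg_neg, ← compl_Iic,
    probReal_compl_eq_one_sub measurableSet_Iic]
  rfl

lemma measurable_stdNormalCDF : Measurable stdNormalCDF :=
  Monotone.measurable fun _ _ h ↦ measureReal_mono (Iic_subset_Iic.2 h)

lemma memLp_stdNormalCDF_comp {Ω : Type*} {_ : MeasurableSpace Ω} {P : Measure Ω}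
    [IsFiniteMeasure P] {X : Ω → ℝ} (hX : AEMeasurable X P) (p : ENNReal) :
    MemLp (fun ω ↦ stdNormalCDF (X ω)) p P :=
  .of_bound (measurable_stdNormalCDF.comp_aemeasurable hX).aestronglyMeasurable 1 <|
    ae_of_all _ fun _ ↦ (Real.norm_of_nonneg measureReal_nonneg).trans_le measureReal_le_one

lemma integral_stdNormalCDF_gaussianReal (v : NNReal) :
    ∫ x, stdNormalCDF x ∂gaussianReal 0 v = 1 / 2 := by
  have hsymm : (gaussianReal 0 v).map (fun y ↦ -y) = gaussianReal 0 v := by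
    rw [gaussianReal_map_neg, neg_zero]
  have hreflect : ∫ x, stdNormalCDF x ∂gaussianReal 0 v
      = 1 - ∫ x, stdNormalCDF x ∂gaussianReal 0 v := by
    conv_lhs =>
      rw [← hsymm, integral_map (by fun_prop) measurable_stdNormalCDF.aestronglyMeasurable]
    simp only [stdNormalCDF_neg]
    rw [integral_sub (integrable_const 1)
      ((memLp_stdNormalCDF_comp aemeasurable_id' 1).integrable le_rfl)]
    simp
  linarith

/-- The standard Gaussian measure on the plane. It lives on `ℝ × ℝ` rather than on
`EuclideanSpace ℝ (Fin 2)` so that its coordinates are those of a pair of random variables. -/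
noncomputable abbrev planarGaussian : Measure (ℝ × ℝ) := (gaussianReal 0 1).prod (gaussianReal 0 1)

lemma integral_mul_exp_neg_sq_div_two : ∫ r in Ioi (0 : ℝ), r * rexp (-r ^ 2 / 2) = 1 := by
  have h := integral_rpow_mul_exp_neg_mul_rpow (p := 2) (q := 1) (b := 1 / 2)
    two_pos (by norm_num) (by norm_num)
  norm_num at h
  rw [← h]
  exact integral_congr_ae (ae_of_all _ fun r ↦ by dsimp only; ring_nf)

lemma gaussianPDFReal_zero_one_mul_polar (r θ : ℝ) :
    gaussianPDFReal 0 1 (r * cos θ) * gaussianPDFReal 0 1 (r * sin θ)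
      = rexp (-r ^ 2 / 2) / (2 * π) := by
  have hsq : √(2 * π) * √(2 * π) = 2 * π := mul_self_sqrt two_pi_pos.le
  have hexp : rexp (-(r * cos θ) ^ 2 / 2) * rexp (-(r * sin θ) ^ 2 / 2) = rexp (-r ^ 2 / 2) := by
    rw [← exp_add]
    congr 1
    linear_combination -(r ^ 2 / 2) * cos_sq_add_sin_sq θ
  simp only [gaussianPDFReal, NNReal.coe_one, mul_one, sub_zero]
  rw [mul_mul_mul_comm, hexp, ← mul_inv, hsq]
  ring

lemma measureReal_planarGaussian {S : Set (ℝ × ℝ)} (hS : MeasurableSet S) :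
    planarGaussian.real S
      = ∫ p in S, gaussianPDFReal 0 1 p.1 * gaussianPDFReal 0 1 p.2 := by
  rw [measureReal_def, planarGaussian, gaussianReal_of_var_ne_zero 0 one_ne_zero,
    prod_withDensity (measurable_gaussianPDF 0 1) (measurable_gaussianPDF 0 1),
    withDensity_apply _ hS, ← integral_toReal]
  · simp only [ENNReal.toReal_mul, toReal_gaussianPDF]
    rfl
  · exact (by fun_prop : Measurable _).aemeasurable
  · exact ae_of_all _ fun _ ↦ ENNReal.mul_lt_top gaussianPDF_lt_top gaussianPDF_lt_top

lemma measureReal_planarGaussian_of_cone {S : Set (ℝ × ℝ)} (hS : MeasurableSet S)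
    (hcone : ∀ r > (0 : ℝ), ∀ p, r • p ∈ S ↔ p ∈ S) :
    planarGaussian.real S
      = volume.real {θ ∈ Ioo (-π) π | (cos θ, sin θ) ∈ S} / (2 * π) := by
  set A : Set ℝ := {θ | (cos θ, sin θ) ∈ S}
  have hA : MeasurableSet A := hS.preimage (by fun_prop)
  calc planarGaussian.real S
      = ∫ p, S.indicator (fun p ↦ gaussianPDFReal 0 1 p.1 * gaussianPDFReal 0 1 p.2) p := by
        rw [measureReal_planarGaussian hS, integral_indicator hS]
    _ = ∫ p in Ioi (0 : ℝ) ×ˢ Ioo (-π) π,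
          p.1 * rexp (-p.1 ^ 2 / 2) * (A.indicator 1 p.2 / (2 * π)) := by
        rw [← integral_comp_polarCoord_symm]
        refine setIntegral_congr_fun (measurableSet_Ioi.prod measurableSet_Ioo) fun p hp ↦ ?_
        have hmem : (p.1 * cos p.2, p.1 * sin p.2) ∈ S ↔ p.2 ∈ A :=
          hcone p.1 hp.1 (cos p.2, sin p.2)
        simp only [polarCoord_symm_apply, smul_eq_mul]
        by_cases hθ : p.2 ∈ A
        · rw [indicator_of_mem hθ, indicator_of_mem (hmem.2 hθ), gaussianPDFReal_zero_one_mul_polar,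
            Pi.one_apply]
          ring
        · simp [hθ, mt hmem.1 hθ]
    _ = (∫ θ in Ioo (-π) π, A.indicator 1 θ) / (2 * π) := by
        rw [Measure.volume_eq_prod,
          setIntegral_prod_mul (fun r ↦ r * rexp (-r ^ 2 / 2)) fun θ ↦ A.indicator 1 θ / (2 * π),
          integral_mul_exp_neg_sq_div_two, one_mul, integral_div]
    _ = volume.real (Ioo (-π) π ∩ A) / (2 * π) := by
        rw [integral_indicator_one hA, measureReal_restrict_apply hA, inter_comm]

lemma setOf_cos_pos_and_mul_cos_add_mul_sin_pos {r : ℝ} (hr : r ∈ Icc (-1) 1) :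
    {θ ∈ Ioo (-π) π | 0 < cos θ ∧ 0 < r * cos θ + √(1 - r ^ 2) * sin θ}
      = Ioo (-arcsin r) (π / 2) := by
  have hsin (θ : ℝ) : r * cos θ + √(1 - r ^ 2) * sin θ = sin (θ + arcsin r) := by
    rw [sin_add, sin_arcsin hr.1 hr.2, cos_arcsin]
    ring
  have hα := arcsin_mem_Icc r
  ext θ
  simp only [hsin, mem_ofPred_eq, mem_Ioo]
  constructor
  · rintro ⟨⟨hθ₁, hθ₂⟩, hcos, hsin⟩
    have hθ : |θ| < π / 2 := by
      by_contra! h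
      rw [← cos_abs] at hcos
      exact hcos.not_ge (cos_nonpos_of_pi_div_two_le_of_le h
        ((abs_lt.2 ⟨hθ₁, hθ₂⟩).le.trans (by linarith [pi_pos])))
    rw [abs_lt] at hθ
    refine ⟨?_, hθ.2⟩
    by_contra! h
    exact hsin.not_ge (sin_nonpos_of_nonpos_of_neg_pi_le (by linarith) (by linarith [hα.1]))
  · rintro ⟨hθ₁, hθ₂⟩
    exact ⟨⟨by linarith [hα.2, pi_pos], by linarith [pi_pos]⟩,
      cos_pos_of_mem_Ioo ⟨by linarith [hα.2], hθ₂⟩,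
      sin_pos_of_pos_of_lt_pi (by linarith) (by linarith [hα.2])⟩

lemma measureReal_planarGaussian_orthant {r : ℝ} (hr : r ∈ Icc (-1) 1) :
    planarGaussian.real
        {p | 0 < p.1 ∧ 0 < r * p.1 + √(1 - r ^ 2) * p.2}
      = 1 / 4 + arcsin r / (2 * π) := by
  rw [measureReal_planarGaussian_of_cone]
  · simp only [mem_ofPred_eq]
    rw [setOf_cos_pos_and_mul_cos_add_mul_sin_pos hr, volume_real_Ioo_of_le]
    · field_simp
      ring
    · linarith [(arcsin_mem_Icc r).1]
  · measurability
  · intro s hs p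
    have hsplit : r * (s * p.1) + √(1 - r ^ 2) * (s * p.2)
        = s * (r * p.1 + √(1 - r ^ 2) * p.2) := by ring
    simp [hsplit, mul_pos_iff_of_pos_left hs]

section SecondMoments

variable {Ω : Type*} {mΩ : MeasurableSpace Ω} {P : Measure Ω} [IsFiniteMeasure P] {X Y : Ω → ℝ}

lemma covariance_linearCombination (hX : MemLp X 2 P) (hY : MemLp Y 2 P) (a b c d : ℝ) :
    cov[fun ω ↦ a * X ω + b * Y ω, fun ω ↦ c * X ω + d * Y ω; P]
      = a * c * Var[X; P] + (a * d + b * c) * cov[X, Y; P] + b * d * Var[Y; P] := by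
  have haX := hX.const_mul a
  have hbY := hY.const_mul b
  have hcX := hX.const_mul c
  have hdY := hY.const_mul d
  change cov[(fun ω ↦ a * X ω) + fun ω ↦ b * Y ω, (fun ω ↦ c * X ω) + fun ω ↦ d * Y ω; P] = _
  rw [covariance_add_left haX hbY (hcX.add hdY), covariance_add_right haX hcX hdY,
    covariance_add_right hbY hcX hdY]
  simp only [covariance_const_mul_left, covariance_const_mul_right, covariance_comm Y X,
    covariance_self hX.aemeasurable, covariance_self hY.aemeasurable]
  ring

lemma variance_linearCombination (hX : MemLp X 2 P) (hY : MemLp Y 2 P) (a b : ℝ) :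
    Var[fun ω ↦ a * X ω + b * Y ω; P]
      = a ^ 2 * Var[X; P] + 2 * (a * b) * cov[X, Y; P] + b ^ 2 * Var[Y; P] := by
  have hmeas : AEMeasurable (fun ω ↦ a * X ω + b * Y ω) P :=
    (hX.aemeasurable.const_mul a).add (hY.aemeasurable.const_mul b)
  rw [← covariance_self hmeas, covariance_linearCombination hX hY]
  ring

lemma sq_covariance_le_variance_mul_variance (hX : MemLp X 2 P) (hY : MemLp Y 2 P) :
    cov[X, Y; P] ^ 2 ≤ Var[X; P] * Var[Y; P] := by
  have hquad (t : ℝ) : 0 ≤ Var[X; P] * (t * t) + 2 * cov[X, Y; P] * t + Var[Y; P] := by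
    have h := variance_nonneg (fun ω ↦ t * X ω + 1 * Y ω) P
    rw [variance_linearCombination hX hY] at h
    linarith
  have hdiscrim := discrim_le_zero hquad
  rw [discrim] at hdiscrim
  linarith

lemma covariance_div_sqrt_mem_Icc (hX : MemLp X 2 P) (hY : MemLp Y 2 P) :
    cov[X, Y; P] / √(Var[X; P] * Var[Y; P]) ∈ Icc (-1) 1 := by
  rw [mem_Icc, ← abs_le, abs_div, abs_of_nonneg (sqrt_nonneg _)]
  exact div_le_one_of_le₀ (abs_le_sqrt (sq_covariance_le_variance_mul_variance hX hY))
    (sqrt_nonneg _)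

end SecondMoments

section PlanarGaussian

variable {Ω Ω' : Type*} {_ : MeasurableSpace Ω} {_ : MeasurableSpace Ω'} {P : Measure Ω}
  {P' : Measure Ω'} {X Y : Ω → ℝ} {X' Y' : Ω' → ℝ}

lemma hasGaussianLaw_linearCombination (h : HasGaussianLaw (fun ω ↦ (X ω, Y ω)) P)
    (a b c d : ℝ) : HasGaussianLaw (fun ω ↦ (a * X ω + b * Y ω, c * X ω + d * Y ω)) P :=
  h.map ((a • ContinuousLinearMap.fst ℝ ℝ ℝ + b • ContinuousLinearMap.snd ℝ ℝ ℝ).prod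
    (c • ContinuousLinearMap.fst ℝ ℝ ℝ + d • ContinuousLinearMap.snd ℝ ℝ ℝ))

lemma charFunDual_map_prodMk_of_hasGaussianLaw
    (h : HasGaussianLaw (fun ω ↦ (X ω, Y ω)) P) (L : StrongDual ℝ (ℝ × ℝ)) :
    charFunDual (P.map fun ω ↦ (X ω, Y ω)) L
      = Complex.exp ((L (1, 0) * P[X] + L (0, 1) * P[Y] : ℝ) * Complex.I
        - (L (1, 0) ^ 2 * Var[X; P] + 2 * (L (1, 0) * L (0, 1)) * cov[X, Y; P]
          + L (0, 1) ^ 2 * Var[Y; P] : ℝ) / 2) := by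
  have := h.isProbabilityMeasure
  have hL (p : ℝ × ℝ) : L p = L (1, 0) * p.1 + L (0, 1) * p.2 := by
    conv_lhs => rw [show p = p.1 • (1, 0) + p.2 • (0, 1) by simp, map_add, map_smul, map_smul]
    simp [mul_comm]
  have hmean : ∫ ω, L (X ω, Y ω) ∂P = L (1, 0) * P[X] + L (0, 1) * P[Y] := by
    simp only [fun ω ↦ hL (X ω, Y ω)]
    rw [integral_add (h.fst.integrable.const_mul _) (h.snd.integrable.const_mul _),
      integral_const_mul, integral_const_mul]
  rw [h.charFunDual_map_eq_fun, hmean]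
  simp only [fun ω ↦ hL (X ω, Y ω)]
  rw [variance_linearCombination h.fst.memLp_two h.snd.memLp_two]

lemma identDistrib_prodMk_of_hasGaussianLaw
    (h : HasGaussianLaw (fun ω ↦ (X ω, Y ω)) P) (h' : HasGaussianLaw (fun ω ↦ (X' ω, Y' ω)) P')
    (hX : P[X] = P'[X']) (hY : P[Y] = P'[Y']) (hVX : Var[X; P] = Var[X'; P'])
    (hVY : Var[Y; P] = Var[Y'; P']) (hXY : cov[X, Y; P] = cov[X', Y'; P']) :
    IdentDistrib (fun ω ↦ (X ω, Y ω)) (fun ω ↦ (X' ω, Y' ω)) P P' where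
  aemeasurable_fst := h.aemeasurable
  aemeasurable_snd := h'.aemeasurable
  map_eq := by
    have := h.isGaussian_map
    have := h'.isGaussian_map
    refine Measure.ext_of_charFunDual (funext fun L ↦ ?_)
    rw [charFunDual_map_prodMk_of_hasGaussianLaw h, charFunDual_map_prodMk_of_hasGaussianLaw h',
      hX, hY, hVX, hVY, hXY]

end PlanarGaussian

section StandardPair

variable {Ω : Type*} {_ : MeasurableSpace Ω} {P : Measure Ω} {Z W : Ω → ℝ}

lemma integral_linearCombination_eq_zero (hZ : HasLaw Z (gaussianReal 0 1) P)
    (hW : HasLaw W (gaussianReal 0 1) P) (a b : ℝ) : ∫ ω, a * Z ω + b * W ω ∂P = 0 := by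
  rw [integral_add (hZ.hasGaussianLaw.integrable.const_mul a)
    (hW.hasGaussianLaw.integrable.const_mul b), integral_const_mul, integral_const_mul,
    hZ.integral_eq, hW.integral_eq, integral_id_gaussianReal]
  ring

lemma covariance_linearCombination_of_indepFun (hZ : HasLaw Z (gaussianReal 0 1) P)
    (hW : HasLaw W (gaussianReal 0 1) P) (h : Z ⟂ᵢ[P] W) (a b c d : ℝ) :
    cov[fun ω ↦ a * Z ω + b * W ω, fun ω ↦ c * Z ω + d * W ω; P] = a * c + b * d := by
  have := hZ.isProbabilityMeasure
  have hZ₂ := hZ.hasGaussianLaw.memLp_two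
  have hW₂ := hW.hasGaussianLaw.memLp_two
  rw [covariance_linearCombination hZ₂ hW₂, h.covariance_eq_zero hZ₂ hW₂, hZ.variance_eq,
    hW.variance_eq, variance_id_gaussianReal, NNReal.coe_one]
  ring

lemma variance_linearCombination_of_indepFun (hZ : HasLaw Z (gaussianReal 0 1) P)
    (hW : HasLaw W (gaussianReal 0 1) P) (h : Z ⟂ᵢ[P] W) (a b : ℝ) :
    Var[fun ω ↦ a * Z ω + b * W ω; P] = a ^ 2 + b ^ 2 := by
  rw [← covariance_self, covariance_linearCombination_of_indepFun hZ hW h]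
  · ring
  · have := hZ.aemeasurable
    have := hW.aemeasurable
    fun_prop

lemma hasLaw_linearCombination_of_indepFun (hZ : HasLaw Z (gaussianReal 0 1) P)
    (hW : HasLaw W (gaussianReal 0 1) P) (h : Z ⟂ᵢ[P] W) (a b : ℝ) :
    HasLaw (fun ω ↦ a * Z ω + b * W ω) (gaussianReal 0 (a ^ 2 + b ^ 2).toNNReal) P := by
  have hgauss : HasGaussianLaw (fun ω ↦ a * Z ω + b * W ω) P :=
    (hasGaussianLaw_linearCombination (h.hasGaussianLaw hZ.hasGaussianLaw hW.hasGaussianLaw)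
      a b 0 0).fst
  refine ⟨hgauss.aemeasurable, ?_⟩
  rw [hgauss.map_eq_gaussianReal, integral_linearCombination_eq_zero hZ hW,
    variance_linearCombination_of_indepFun hZ hW h]

lemma hasLaw_mul_add_sqrt_one_sub_sq_mul (hZ : HasLaw Z (gaussianReal 0 1) P)
    (hW : HasLaw W (gaussianReal 0 1) P) (h : Z ⟂ᵢ[P] W) {r : ℝ} (hr : r ∈ Icc (-1) 1) :
    HasLaw (fun ω ↦ r * Z ω + √(1 - r ^ 2) * W ω) (gaussianReal 0 1) P := by
  have hlaw := hasLaw_linearCombination_of_indepFun hZ hW h r √(1 - r ^ 2)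
  rwa [sq_sqrt (by nlinarith [hr.1, hr.2]), add_sub_cancel, toNNReal_one] at hlaw

end StandardPair

lemma hasLaw_fst_planarGaussian : HasLaw Prod.fst (gaussianReal 0 1) planarGaussian :=
  measurePreserving_fst.hasLaw

lemma hasLaw_snd_planarGaussian : HasLaw Prod.snd (gaussianReal 0 1) planarGaussian :=
  measurePreserving_snd.hasLaw

lemma indepFun_fst_snd_planarGaussian : Prod.fst ⟂ᵢ[planarGaussian] Prod.snd :=
  indepFun_prod measurable_id measurable_id

section Sheppard

variable {Ω : Type*} {_ : MeasurableSpace Ω} {P : Measure Ω} {X Y : Ω → ℝ}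

lemma identDistrib_linearCombination_planarGaussian (h : HasGaussianLaw (fun ω ↦ (X ω, Y ω)) P)
    (hX : P[X] = 0) (hY : P[Y] = 0) {a b c d : ℝ} (hVX : Var[X; P] = a ^ 2 + b ^ 2)
    (hVY : Var[Y; P] = c ^ 2 + d ^ 2) (hXY : cov[X, Y; P] = a * c + b * d) :
    IdentDistrib (fun ω ↦ (X ω, Y ω)) (fun p ↦ (a * p.1 + b * p.2, c * p.1 + d * p.2))
      P planarGaussian := by
  have hU := hasLaw_fst_planarGaussian
  have hV := hasLaw_snd_planarGaussian
  have hUV := indepFun_fst_snd_planarGaussian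
  apply identDistrib_prodMk_of_hasGaussianLaw h
  · exact hasGaussianLaw_linearCombination
      (hUV.hasGaussianLaw hU.hasGaussianLaw hV.hasGaussianLaw) a b c d
  · rw [hX, integral_linearCombination_eq_zero hU hV]
  · rw [hY, integral_linearCombination_eq_zero hU hV]
  · rw [variance_linearCombination_of_indepFun hU hV hUV, hVX]
  · rw [variance_linearCombination_of_indepFun hU hV hUV, hVY]
  · rw [covariance_linearCombination_of_indepFun hU hV hUV, hXY]

theorem measureReal_pos_and_pos_of_hasGaussianLaw (h : HasGaussianLaw (fun ω ↦ (X ω, Y ω)) P)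
    (hX : P[X] = 0) (hY : P[Y] = 0) (hVX : 0 < Var[X; P]) (hVY : 0 < Var[Y; P]) :
    P.real {ω | 0 < X ω ∧ 0 < Y ω}
      = 1 / 4 + arcsin (cov[X, Y; P] / √(Var[X; P] * Var[Y; P])) / (2 * π) := by
  have := h.isProbabilityMeasure
  set r := cov[X, Y; P] / √(Var[X; P] * Var[Y; P]) with hr
  have hr₁ : r ∈ Icc (-1) 1 := covariance_div_sqrt_mem_Icc h.fst.memLp_two h.snd.memLp_two
  obtain ⟨s, hs, hVs⟩ : ∃ s > 0, Var[X; P] = s ^ 2 := ⟨_, sqrt_pos.2 hVX, (sq_sqrt hVX.le).symm⟩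
  obtain ⟨t, ht, hVt⟩ : ∃ t > 0, Var[Y; P] = t ^ 2 := ⟨_, sqrt_pos.2 hVY, (sq_sqrt hVY.le).symm⟩
  have hcov : cov[X, Y; P] = s * (t * r) := by
    rw [hr, hVs, hVt, ← mul_pow, sqrt_sq (by positivity)]
    field_simp
  have hq : √(1 - r ^ 2) ^ 2 = 1 - r ^ 2 := sq_sqrt (by nlinarith [hr₁.1, hr₁.2])
  have hlaw := identDistrib_linearCombination_planarGaussian h hX hY
    (a := s) (b := 0) (c := t * r) (d := t * √(1 - r ^ 2)) (by linear_combination hVs)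
    (by linear_combination hVt - t ^ 2 * hq) (by linear_combination hcov)
  calc P.real {ω | 0 < X ω ∧ 0 < Y ω}
      = planarGaussian.real
          {p | 0 < s * p.1 + 0 * p.2 ∧ 0 < t * r * p.1 + t * √(1 - r ^ 2) * p.2} :=
        congrArg ENNReal.toReal (hlaw.measure_mem_eq (measurableSet_Ioi.prod measurableSet_Ioi))
    _ = planarGaussian.real {p | 0 < p.1 ∧ 0 < r * p.1 + √(1 - r ^ 2) * p.2} := by
        simp only [zero_mul, add_zero, mul_assoc, ← mul_add, mul_pos_iff_of_pos_left hs,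
          mul_pos_iff_of_pos_left ht]
    _ = 1 / 4 + arcsin r / (2 * π) := measureReal_planarGaussian_orthant hr₁

end Sheppard

section Convolution

variable {E : Type*} [NormedAddCommGroup E] [NormedSpace ℝ E] [MeasurableSpace E] [BorelSpace E]
  [SecondCountableTopology E] {μ ν : Measure E} [IsProbabilityMeasure μ] [IsProbabilityMeasure ν]
  {L L₁ L₂ : StrongDual ℝ E}

lemma integral_strongDual_conv (hμ : Integrable L μ) (hν : Integrable L ν) :
    (μ ∗ ν)[L] = μ[L] + ν[L] := by
  rw [Measure.conv, integral_map (by fun_prop) (by fun_prop)]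
  simp only [map_add]
  rw [integral_add (hμ.comp_fst ν) (hν.comp_snd μ), integral_fun_fst, integral_fun_snd]
  simp

lemma covariance_conv (hμ₁ : MemLp L₁ 2 μ) (hμ₂ : MemLp L₂ 2 μ) (hν₁ : MemLp L₁ 2 ν)
    (hν₂ : MemLp L₂ 2 ν) :
    cov[L₁, L₂; μ ∗ ν] = cov[L₁, L₂; μ] + cov[L₁, L₂; ν] := by
  have hfst : cov[fun p ↦ L₁ p.1, fun p ↦ L₂ p.1; μ.prod ν] = cov[L₁, L₂; μ] :=
    measurePreserving_fst.hasLaw.covariance_fun_comp (by fun_prop) (by fun_prop)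
  have hsnd : cov[fun p ↦ L₁ p.2, fun p ↦ L₂ p.2; μ.prod ν] = cov[L₁, L₂; ν] :=
    measurePreserving_snd.hasLaw.covariance_fun_comp (by fun_prop) (by fun_prop)
  have hadd (L : StrongDual ℝ E) :
      L ∘ (fun p : E × E ↦ p.1 + p.2) = (fun p ↦ L p.1) + fun p ↦ L p.2 :=
    funext fun p ↦ L.map_add p.1 p.2
  rw [Measure.conv, covariance_map (by fun_prop) (by fun_prop) (by fun_prop), hadd, hadd,
    covariance_add_left (hμ₁.comp_fst ν) (hν₁.comp_snd μ) ((hμ₂.comp_fst ν).add (hν₂.comp_snd μ)),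
    covariance_add_right (hμ₁.comp_fst ν) (hμ₂.comp_fst ν) (hν₂.comp_snd μ),
    covariance_add_right (hν₁.comp_snd μ) (hμ₂.comp_fst ν) (hν₂.comp_snd μ),
    hfst, hsnd, covariance_fst_snd_prod hμ₁ hν₂, covariance_comm (fun p ↦ L₁ (Prod.snd p)),
    covariance_fst_snd_prod hμ₂ hν₁]
  ring

lemma variance_conv (hμ : MemLp L 2 μ) (hν : MemLp L 2 ν) :
    Var[L; μ ∗ ν] = Var[L; μ] + Var[L; ν] := by
  simpa only [covariance_self L.continuous.aemeasurable] using covariance_conv hμ hμ hν hν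

end Convolution

lemma integral_stdNormalCDF_mul_stdNormalCDF_eq_conv (μ : Measure (ℝ × ℝ)) [IsFiniteMeasure μ] :
    ∫ p, stdNormalCDF p.1 * stdNormalCDF p.2 ∂μ
      = (μ ∗ planarGaussian).real (Ioi 0 ×ˢ Ioi 0) := by
  have hS : MeasurableSet (Ioi (0 : ℝ) ×ˢ Ioi (0 : ℝ)) := measurableSet_Ioi.prod measurableSet_Ioi
  rw [← integral_indicator_one hS, integral_conv ((integrable_const 1).indicator hS)]
  refine integral_congr_ae (ae_of_all _ fun p ↦ ?_)
  have hshift : (fun q ↦ (Ioi (0 : ℝ) ×ˢ Ioi (0 : ℝ)).indicator (1 : ℝ × ℝ → ℝ) (p + q))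
      = (Ioi (-p.1) ×ˢ Ioi (-p.2)).indicator 1 := by
    ext q
    simp [indicator, neg_lt_iff_pos_add']
  dsimp only
  rw [hshift, integral_indicator_one (measurableSet_Ioi.prod measurableSet_Ioi),
    measureReal_prod_prod, stdNormalCDF_eq_measureReal_Ioi_neg, stdNormalCDF_eq_measureReal_Ioi_neg]

theorem integral_stdNormalCDF_fst_mul_stdNormalCDF_snd {μ : Measure (ℝ × ℝ)} [IsGaussian μ]
    (hfst : μ[Prod.fst] = 0) (hsnd : μ[Prod.snd] = 0) :
    ∫ p, stdNormalCDF p.1 * stdNormalCDF p.2 ∂μ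
      = 1 / 4 + arcsin (cov[Prod.fst, Prod.snd; μ]
          / √((Var[Prod.fst; μ] + 1) * (Var[Prod.snd; μ] + 1))) / (2 * π) := by
  have hU := hasLaw_fst_planarGaussian
  have hV := hasLaw_snd_planarGaussian
  have hL (L : StrongDual ℝ (ℝ × ℝ)) (ν : Measure (ℝ × ℝ)) [IsGaussian ν] : MemLp L 2 ν :=
    IsGaussian.memLp_dual ν L 2 (by simp)
  have hmean (L : StrongDual ℝ (ℝ × ℝ)) : (μ ∗ planarGaussian)[L] = μ[L] + planarGaussian[L] :=
    integral_strongDual_conv (IsGaussian.integrable_dual _ _) (IsGaussian.integrable_dual _ _)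
  have hmean_fst : (μ ∗ planarGaussian)[Prod.fst] = 0 := by
    refine (hmean (.fst ℝ ℝ ℝ)).trans ?_
    simp [hfst, hU.integral_eq]
  have hmean_snd : (μ ∗ planarGaussian)[Prod.snd] = 0 := by
    refine (hmean (.snd ℝ ℝ ℝ)).trans ?_
    simp [hsnd, hV.integral_eq]
  have hvar_fst : Var[Prod.fst; μ ∗ planarGaussian] = Var[Prod.fst; μ] + 1 := by
    refine (variance_conv (hL (.fst ℝ ℝ ℝ) μ) (hL _ _)).trans ?_
    simp [hU.variance_eq]
  have hvar_snd : Var[Prod.snd; μ ∗ planarGaussian] = Var[Prod.snd; μ] + 1 := by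
    refine (variance_conv (hL (.snd ℝ ℝ ℝ) μ) (hL _ _)).trans ?_
    simp [hV.variance_eq]
  have hcov : cov[Prod.fst, Prod.snd; μ ∗ planarGaussian] = cov[Prod.fst, Prod.snd; μ] := by
    refine (covariance_conv (hL (.fst ℝ ℝ ℝ) μ) (hL (.snd ℝ ℝ ℝ) μ) (hL _ _) (hL _ _)).trans ?_
    simp [indepFun_fst_snd_planarGaussian.covariance_eq_zero hU.hasGaussianLaw.memLp_two
      hV.hasGaussianLaw.memLp_two]
  rw [integral_stdNormalCDF_mul_stdNormalCDF_eq_conv, ← hcov, ← hvar_fst, ← hvar_snd]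
  refine measureReal_pos_and_pos_of_hasGaussianLaw IsGaussian.hasGaussianLaw_id hmean_fst hmean_snd
    ?_ ?_
  · linarith [variance_nonneg Prod.fst μ]
  · linarith [variance_nonneg Prod.snd μ]

lemma two_mul_sin_pi_div_six_mul_arcsin_half {r : ℝ} (hr : r ∈ Icc (-1) 1) :
    2 * sin (π / 6 * (arcsin (r / 2) / (2 * π) / √(1 / 12 * (1 / 12)))) = r := by
  have hangle : π / 6 * (arcsin (r / 2) / (2 * π) / (1 / 12)) = arcsin (r / 2) := by
    field_simp
    ring
  rw [sqrt_mul_self (by norm_num), hangle,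
    sin_arcsin (by linarith [hr.1]) (by linarith [hr.2])]
  ring

lemma arcsin_one_half : arcsin (1 / 2) = π / 6 := by
  rw [← sin_pi_div_six, arcsin_sin (by linarith [pi_pos]) (by linarith [pi_pos])]

section CovarianceFormula

variable {Ω : Type*} {_ : MeasurableSpace Ω} {P : Measure Ω} {X Y : Ω → ℝ}

lemma integral_stdNormalCDF_comp_mul_stdNormalCDF_comp
    (h : HasGaussianLaw (fun ω ↦ (X ω, Y ω)) P) (hX : P[X] = 0) (hY : P[Y] = 0) :
    ∫ ω, stdNormalCDF (X ω) * stdNormalCDF (Y ω) ∂P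
      = 1 / 4 + arcsin (cov[X, Y; P] / √((Var[X; P] + 1) * (Var[Y; P] + 1))) / (2 * π) := by
  have hμ := h.isGaussian_map
  have hlaw : HasLaw (fun ω ↦ (X ω, Y ω)) (P.map fun ω ↦ (X ω, Y ω)) P := ⟨h.aemeasurable, rfl⟩
  generalize P.map (fun ω ↦ (X ω, Y ω)) = μ at hμ hlaw
  have hmean_fst : μ[Prod.fst] = 0 := by
    rw [← hlaw.integral_comp (by fun_prop), ← hX]
    rfl
  have hmean_snd : μ[Prod.snd] = 0 := by
    rw [← hlaw.integral_comp (by fun_prop), ← hY]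
    rfl
  have hcov {f g : ℝ × ℝ → ℝ} (hf : Measurable f) (hg : Measurable g) :
      cov[fun ω ↦ f (X ω, Y ω), fun ω ↦ g (X ω, Y ω); P] = cov[f, g; μ] :=
    hlaw.covariance_fun_comp hf.aemeasurable hg.aemeasurable
  rw [← covariance_self h.fst.aemeasurable, ← covariance_self h.snd.aemeasurable,
    hcov measurable_fst measurable_snd, hcov measurable_fst measurable_fst,
    hcov measurable_snd measurable_snd, covariance_self measurable_fst.aemeasurable,
    covariance_self measurable_snd.aemeasurable,
    ← integral_stdNormalCDF_fst_mul_stdNormalCDF_snd hmean_fst hmean_snd]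
  refine hlaw.integral_comp (f := fun p ↦ stdNormalCDF p.1 * stdNormalCDF p.2) ?_
  exact ((measurable_stdNormalCDF.comp measurable_fst).mul
    (measurable_stdNormalCDF.comp measurable_snd)).aestronglyMeasurable

lemma integral_stdNormalCDF_comp (h : HasGaussianLaw X P) (hX : P[X] = 0) :
    ∫ ω, stdNormalCDF (X ω) ∂P = 1 / 2 := by
  have hlaw : HasLaw X (gaussianReal 0 Var[X; P].toNNReal) P :=
    ⟨h.aemeasurable, hX ▸ h.map_eq_gaussianReal⟩
  rw [← integral_stdNormalCDF_gaussianReal Var[X; P].toNNReal]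
  exact hlaw.integral_comp measurable_stdNormalCDF.aestronglyMeasurable

theorem covariance_stdNormalCDF_comp (h : HasGaussianLaw (fun ω ↦ (X ω, Y ω)) P)
    (hX : P[X] = 0) (hY : P[Y] = 0) :
    cov[fun ω ↦ stdNormalCDF (X ω), fun ω ↦ stdNormalCDF (Y ω); P]
      = arcsin (cov[X, Y; P] / √((Var[X; P] + 1) * (Var[Y; P] + 1))) / (2 * π) := by
  have := h.isProbabilityMeasure
  rw [covariance_eq_sub (memLp_stdNormalCDF_comp h.fst.aemeasurable 2)
    (memLp_stdNormalCDF_comp h.snd.aemeasurable 2), integral_stdNormalCDF_comp h.fst hX,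
    integral_stdNormalCDF_comp h.snd hY]
  simp only [Pi.mul_apply]
  rw [integral_stdNormalCDF_comp_mul_stdNormalCDF_comp h hX hY]
  ring

theorem covariance_stdNormalCDF_comp_of_hasLaw_standard
    (h : HasGaussianLaw (fun ω ↦ (X ω, Y ω)) P) (hX : HasLaw X (gaussianReal 0 1) P)
    (hY : HasLaw Y (gaussianReal 0 1) P) :
    cov[fun ω ↦ stdNormalCDF (X ω), fun ω ↦ stdNormalCDF (Y ω); P]
      = arcsin (cov[X, Y; P] / 2) / (2 * π) := by
  rw [covariance_stdNormalCDF_comp h (by rw [hX.integral_eq, integral_id_gaussianReal])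
    (by rw [hY.integral_eq, integral_id_gaussianReal]), hX.variance_eq, hY.variance_eq,
    variance_id_gaussianReal, NNReal.coe_one, sqrt_mul_self (by norm_num), one_add_one_eq_two]

theorem variance_stdNormalCDF_comp (h : HasLaw X (gaussianReal 0 1) P) :
    Var[fun ω ↦ stdNormalCDF (X ω); P] = 1 / 12 := by
  have := h.isProbabilityMeasure
  have hdiag : HasGaussianLaw (fun ω ↦ (X ω, X ω)) P :=
    h.hasGaussianLaw.map ((ContinuousLinearMap.id ℝ ℝ).prod (.id ℝ ℝ))
  rw [← covariance_self (memLp_stdNormalCDF_comp h.aemeasurable 2).aemeasurable,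
    covariance_stdNormalCDF_comp_of_hasLaw_standard hdiag h h, covariance_self h.aemeasurable,
    h.variance_eq, variance_id_gaussianReal, NNReal.coe_one, arcsin_one_half]
  field_simp
  norm_num

end CovarianceFormula

end

/-- For a bivariate standard Gaussian vector `(Z, Z₂)` with correlation `ρ`, the covariance
of the uniforms `Φ(Z)` and `Φ(Z₂)` is `(1/(2π)) arcsin(ρ/2)`; their variances are `1/12`,
so the uniform correlation `ρ_U` satisfies `ρ = 2 sin((π/6) ρ_U)`. -/
theorem stmt12 {Ω : Type*} [MeasurableSpace Ω] (P : Measure Ω) [IsProbabilityMeasure P]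
    (Z W : Ω → ℝ) (hZm : Measurable Z) (hWm : Measurable W)
    (hZ : Measure.map Z P = gaussianReal 0 1) (hW : Measure.map W P = gaussianReal 0 1)
    (hindep : IndepFun Z W P)
    (ρ : ℝ) (hρ : ρ ∈ Set.Icc (-1 : ℝ) 1)
    (Z₂ : Ω → ℝ) (hZ₂ : ∀ ω, Z₂ ω = ρ * Z ω + Real.sqrt (1 - ρ ^ 2) * W ω) :
    (∫ ω, stdNormalCDF (Z ω) * stdNormalCDF (Z₂ ω) ∂P)
        - (∫ ω, stdNormalCDF (Z ω) ∂P) * (∫ ω, stdNormalCDF (Z₂ ω) ∂P)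
      = (1 / (2 * π)) * Real.arcsin (ρ / 2) ∧
    (∫ ω, stdNormalCDF (Z ω) ^ 2 ∂P) - (∫ ω, stdNormalCDF (Z ω) ∂P) ^ 2 = 1 / 12 ∧
    (∫ ω, stdNormalCDF (Z₂ ω) ^ 2 ∂P) - (∫ ω, stdNormalCDF (Z₂ ω) ∂P) ^ 2 = 1 / 12 ∧
    ρ = 2 * Real.sin ((π / 6) *
      (((∫ ω, stdNormalCDF (Z ω) * stdNormalCDF (Z₂ ω) ∂P)
          - (∫ ω, stdNormalCDF (Z ω) ∂P) * (∫ ω, stdNormalCDF (Z₂ ω) ∂P)) /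
        Real.sqrt ((1 / 12) * (1 / 12)))) := by
  have hlawZ : HasLaw Z (gaussianReal 0 1) P := ⟨hZm.aemeasurable, hZ⟩
  have hlawW : HasLaw W (gaussianReal 0 1) P := ⟨hWm.aemeasurable, hW⟩
  obtain rfl : Z₂ = fun ω ↦ ρ * Z ω + √(1 - ρ ^ 2) * W ω := funext hZ₂
  have hjoint : HasGaussianLaw (fun ω ↦ (Z ω, ρ * Z ω + √(1 - ρ ^ 2) * W ω)) P := by
    simpa using hasGaussianLaw_linearCombination
      (hindep.hasGaussianLaw hlawZ.hasGaussianLaw hlawW.hasGaussianLaw) 1 0 ρ √(1 - ρ ^ 2)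
  have hlaw₂ := hasLaw_mul_add_sqrt_one_sub_sq_mul hlawZ hlawW hindep hρ
  have hcorr : cov[Z, fun ω ↦ ρ * Z ω + √(1 - ρ ^ 2) * W ω; P] = ρ := by
    simpa using covariance_linearCombination_of_indepFun hlawZ hlawW hindep 1 0 ρ √(1 - ρ ^ 2)
  have hcov := covariance_stdNormalCDF_comp_of_hasLaw_standard hjoint hlawZ hlaw₂
  have hvar := variance_stdNormalCDF_comp hlawZ
  have hvar₂ := variance_stdNormalCDF_comp hlaw₂
  have hL := memLp_stdNormalCDF_comp hlawZ.aemeasurable 2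
  have hL₂ := memLp_stdNormalCDF_comp hlaw₂.aemeasurable 2
  rw [hcorr, covariance_eq_sub hL hL₂] at hcov
  rw [variance_eq_sub hL] at hvar
  rw [variance_eq_sub hL₂] at hvar₂
  simp only [Pi.mul_apply, Pi.pow_apply] at hcov hvar hvar₂
  refine ⟨by rw [hcov]; ring, hvar, hvar₂, ?_⟩
  rw [hcov, two_mul_sin_pi_div_six_mul_arcsin_half hρ]
end
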